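/- arXiv:1607.03587 — 3 statements merged into one kernel-verified Lean document; each statement's English description precedes it below -/
import Mathlib

section
/- Let (e_i) be a normalized, 1-spreading, bimonotone Schauder basis of a Banach space X which is not weakly null. Then (e_i) is boundedly complete if and only if c0 does not embed into X. -/
open Filter Finset Topology NormedSpace
open scoped NNReal

/-- `e` is a Schauder basis of `X`: every vector has a unique expansion whose partial
sums converge in norm. -/
def IsSchauderBasis {X : Type} [NormedAddCommGroup X] [NormedSpace ℝ X] (e : ℕ → X) : Prop :=
  ∀ x : X, ∃! a : ℕ → ℝ,
    Tendsto (fun n => ∑ i ∈ Finset.range n, a i • e i) atTop (𝓝 x)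

/-- A sequence is weakly null if it tends to `0` in the weak topology. -/
def WeaklyNull {X : Type} [NormedAddCommGroup X] [NormedSpace ℝ X] (z : ℕ → X) : Prop :=
  ∀ f : X →L[ℝ] ℝ, Tendsto (fun n => f (z n)) atTop (𝓝 (0 : ℝ))

/-- `e` is `1`-spreading. -/
def IsOneSpreading {X : Type} [NormedAddCommGroup X] [NormedSpace ℝ X] (e : ℕ → X) : Prop :=
  ∀ (k : ℕ) (a : ℕ → ℝ) (n : ℕ → ℕ), StrictMono n →
    ‖∑ i ∈ Finset.range k, a i • e (n i)‖ = ‖∑ i ∈ Finset.range k, a i • e i‖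

/-- `e` is bimonotone: interval projections of (finitely supported) expansions have norm
at most the norm of the whole vector. -/
def IsBimonotone {X : Type} [NormedAddCommGroup X] [NormedSpace ℝ X] (e : ℕ → X) : Prop :=
  ∀ (N m n : ℕ) (a : ℕ → ℝ),
    ‖∑ i ∈ (Finset.range N).filter (fun i => m ≤ i ∧ i ≤ n), a i • e i‖ ≤
      ‖∑ i ∈ Finset.range N, a i • e i‖

/-- `Z` embeds (isomorphically) into `W`. -/
def Embeds (Z W : Type) [NormedAddCommGroup Z] [NormedSpace ℝ Z]
    [NormedAddCommGroup W] [NormedSpace ℝ W] : Prop :=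
  ∃ (T : Z →ₗ[ℝ] W) (c C : ℝ), 0 < c ∧ 0 < C ∧
    ∀ z : Z, c * ‖z‖ ≤ ‖T z‖ ∧ ‖T z‖ ≤ C * ‖z‖

/-- The space `c₀` of real sequences vanishing at infinity. -/
noncomputable abbrev spaceC0 : Type := ZeroAtInftyContinuousMap ℕ ℝ

/-- `e` is boundedly complete. -/
def BoundedlyComplete {X : Type} [NormedAddCommGroup X] [NormedSpace ℝ X] (e : ℕ → X) : Prop :=
  ∀ a : ℕ → ℝ, (∃ C : ℝ, ∀ n, ‖∑ i ∈ Finset.range n, a i • e i‖ ≤ C) →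
    ∃ x : X, Tendsto (fun n => ∑ i ∈ Finset.range n, a i • e i) atTop (𝓝 x)

namespace BCNoC0

variable {X : Type} [NormedAddCommGroup X] [NormedSpace ℝ X]

lemma bimono_Ico {e : ℕ → X} (hbi : IsBimonotone e) (a : ℕ → ℝ) {m n N : ℕ} (h : n ≤ N) :
    ‖∑ i ∈ Finset.Ico m n, a i • e i‖ ≤ ‖∑ i ∈ Finset.range N, a i • e i‖ := by
  rcases Nat.eq_zero_or_pos n with h0 | h0
  · subst h0; simp
  · have := hbi N m (n - 1) a
    have hs : (Finset.range N).filter (fun i => m ≤ i ∧ i ≤ n - 1) = Finset.Ico m n := by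
      ext i
      simp only [Finset.mem_filter, Finset.mem_range, Finset.mem_Ico]
      omega
    rwa [hs] at this

lemma exists_coef {e : ℕ → X} (hbasis : IsSchauderBasis e) (hbi : IsBimonotone e) :
    ∃ c : X →ₗ[ℝ] (ℕ → ℝ),
      (∀ x, Tendsto (fun n => ∑ i ∈ Finset.range n, c x i • e i) atTop (𝓝 x)) ∧
      (∀ j, c (e j) = Pi.single j 1) ∧
      ∀ m n x, ‖∑ i ∈ Finset.Ico m n, c x i • e i‖ ≤ ‖x‖ := by
  choose c hc hu using hbasis
  refine ⟨{ toFun := c, map_add' := ?_, map_smul' := ?_ }, hc, ?_, ?_⟩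
  · intro x y
    symm
    apply hu
    simpa [add_smul, Finset.sum_add_distrib] using (hc x).add (hc y)
  · intro r x
    symm
    apply hu
    simpa [mul_smul, Finset.smul_sum] using (hc x).const_smul r
  · intro j
    symm
    apply hu
    apply tendsto_const_nhds.congr'
    filter_upwards [eventually_gt_atTop j] with n hn
    rw [Finset.sum_eq_single j]
    · simp
    · intro b _ hb; simp [hb]
    · intro h; simp at h; omega
  · intro m n x
    refine ge_of_tendsto (hc x).norm ?_
    filter_upwards [eventually_ge_atTop n] with N hN
    exact bimono_Ico hbi _ hN

lemma block_index (n : ℕ → ℕ) (hn : StrictMono n) (h0 : n 0 = 0) :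
    ∃ k : ℕ → ℕ, (∀ i, n (k i) ≤ i ∧ i < n (k i + 1)) ∧
      (∀ i j, n j ≤ i → i < n (j + 1) → k i = j) ∧ Monotone k := by
  have : ∀ i, ∃ k, n k ≤ i ∧ i < n (k + 1) := by
    intro i
    induction i with
    | zero => exact ⟨0, by omega, by have := hn (show 0 < 0 + 1 by omega); omega⟩
    | succ i ih =>
      obtain ⟨k, h1, h2⟩ := ih
      by_cases h : i + 1 < n (k + 1)
      · exact ⟨k, by omega, h⟩
      · have := hn (show k + 1 < k + 1 + 1 by omega)
        exact ⟨k + 1, by omega, by omega⟩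
  choose k hk using this
  have key : ∀ i i' j j', n j ≤ i → i < n (j + 1) → n j' ≤ i' → i' < n (j' + 1) → i ≤ i' →
      j ≤ j' := by
    intro i i' j j' h1 h2 h3 h4 h5
    by_contra h
    have := hn.monotone (show j' + 1 ≤ j by omega)
    omega
  refine ⟨k, hk, ?_, ?_⟩
  · intro i j h1 h2
    exact le_antisymm (key i i _ _ (hk i).1 (hk i).2 h1 h2 le_rfl)
      (key i i _ _ h1 h2 (hk i).1 (hk i).2 le_rfl)
  · intro i i' h
    exact key i i' _ _ (hk i).1 (hk i).2 (hk i').1 (hk i').2 h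

lemma sum_blocks {M : Type} [AddCommMonoid M] (n : ℕ → ℕ) (hn : StrictMono n) (h0 : n 0 = 0)
    (g : ℕ → M) (K : ℕ) :
    ∑ i ∈ Finset.range (n K), g i =
      ∑ k ∈ Finset.range K, ∑ i ∈ Finset.Ico (n k) (n (k + 1)), g i := by
  induction K with
  | zero => simp [h0]
  | succ K ih =>
    rw [Finset.sum_range_succ, ← ih]
    exact (Finset.sum_range_add_sum_Ico g (hn.monotone (Nat.le_succ K))).symm

lemma wuc_abs {z : ℕ → X} {K : ℝ} (hz : ∀ F : Finset ℕ, ‖∑ k ∈ F, z k‖ ≤ K)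
    (f : X →ₗ[ℝ] ℝ) (hf : ∀ x, |f x| ≤ ‖x‖) (F : Finset ℕ) :
    ∑ k ∈ F, |f (z k)| ≤ 2 * K := by
  classical
  rw [← Finset.sum_filter_add_sum_filter_not F (fun k => 0 ≤ f (z k))]
  have h1 : ∑ k ∈ F with 0 ≤ f (z k), |f (z k)| ≤ K := by
    refine le_trans (le_of_eq ?_) ((le_abs_self _).trans ((hf _).trans
      (hz (F.filter (fun k => 0 ≤ f (z k))))))
    rw [map_sum]
    exact Finset.sum_congr rfl fun k hk => abs_of_nonneg (Finset.mem_filter.1 hk).2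
  have h2 : ∑ k ∈ F with ¬ 0 ≤ f (z k), |f (z k)| ≤ K := by
    refine le_trans (le_of_eq ?_) ((neg_le_abs _).trans ((hf _).trans
      (hz (F.filter (fun k => ¬ 0 ≤ f (z k))))))
    rw [map_sum, ← Finset.sum_neg_distrib]
    exact Finset.sum_congr rfl fun k hk => abs_of_neg (not_le.1 (Finset.mem_filter.1 hk).2)
  linarith

lemma wuc_bound {z : ℕ → X} {K : ℝ} (hz : ∀ F : Finset ℕ, ‖∑ k ∈ F, z k‖ ≤ K)
    (F : Finset ℕ) (b : ℕ → ℝ) {B : ℝ} (hB : 0 ≤ B) (hb : ∀ k ∈ F, |b k| ≤ B) :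
    ‖∑ k ∈ F, b k • z k‖ ≤ B * (2 * K) := by
  obtain ⟨f, hf1, hf2⟩ := exists_dual_vector'' ℝ (∑ k ∈ F, b k • z k)
  have hf : ∀ x, |f x| ≤ ‖x‖ := fun x => by
    have := f.le_of_opNorm_le hf1 x
    simpa using this
  have hf2' : f (∑ k ∈ F, b k • z k) = ‖∑ k ∈ F, b k • z k‖ := by simpa using hf2
  rw [← hf2', map_sum]
  calc ∑ k ∈ F, f (b k • z k) ≤ ∑ k ∈ F, B * |f (z k)| := by
        apply Finset.sum_le_sum
        intro k hk
        rw [map_smul, smul_eq_mul]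
        refine (le_abs_self _).trans ?_
        rw [abs_mul]
        exact mul_le_mul_of_nonneg_right (hb k hk) (abs_nonneg _)
    _ = B * ∑ k ∈ F, |f (z k)| := by rw [Finset.mul_sum]
    _ ≤ B * (2 * K) := mul_le_mul_of_nonneg_left (wuc_abs hz f.toLinearMap hf F) hB

/-- blocks of the coordinates of a non convergent series with bounded partial sums -/
lemma exists_blocks [CompleteSpace X] (S : ℕ → X)
    (hS : ¬ ∃ x, Tendsto S atTop (𝓝 x)) :
    ∃ (δ : ℝ) (n : ℕ → ℕ), 0 < δ ∧ StrictMono n ∧ n 0 = 0 ∧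
      ∀ k, δ ≤ ‖S (n (k + 1)) - S (n k)‖ := by
  have h1 : ¬ CauchySeq S := fun h => hS (cauchySeq_tendsto_of_complete h)
  rw [Metric.cauchySeq_iff] at h1
  push Not at h1
  obtain ⟨ε, hε, h⟩ := h1
  have step : ∀ N, ∃ m, N < m ∧ ε / 2 ≤ ‖S m - S N‖ := by
    intro N
    obtain ⟨p, hp, q, hq, hpq⟩ := h N
    have key : ∀ m, N ≤ m → ε / 2 ≤ ‖S m - S N‖ → N < m := by
      intro m hm h
      rcases hm.eq_or_lt with h' | h'
      · subst h'; simp at h; linarith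
      · exact h'
    by_cases hp' : ε / 2 ≤ ‖S p - S N‖
    · exact ⟨p, key p hp hp', hp'⟩
    · have : ε / 2 ≤ ‖S q - S N‖ := by
        have h3 := dist_triangle_right (S p) (S q) (S N)
        rw [dist_eq_norm (S p) (S N), dist_eq_norm (S q) (S N)] at h3
        linarith
      exact ⟨q, key q hq this, this⟩
  choose g hg1 hg2 using step
  refine ⟨ε / 2, fun k => Nat.rec 0 (fun _ m => g m) k, by linarith, ?_, rfl, ?_⟩
  · exact strictMono_nat_of_lt_succ fun k => hg1 _
  · intro k; exact hg2 _

lemma embeds_of_wuc [CompleteSpace X] {z : ℕ → X} {K δ : ℝ} (hδ : 0 < δ)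
    (hz : ∀ F : Finset ℕ, ‖∑ k ∈ F, z k‖ ≤ K)
    (Q : ℕ → X →L[ℝ] X) (hQ : ∀ k x, ‖Q k x‖ ≤ ‖x‖)
    (hQ0 : ∀ k j, j ≠ k → Q k (z j) = 0) (hQ1 : ∀ k, δ ≤ ‖Q k (z k)‖) :
    Embeds spaceC0 X := by
  have hK : 0 ≤ K := (norm_nonneg _).trans (hz ∅)
  have hle : ∀ (b : spaceC0) k, |b k| ≤ ‖b‖ := fun b k =>
    (b.toBCF.norm_coe_le_norm k)
  have hsum : ∀ b : spaceC0, Summable (fun k => b k • z k) := by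
    intro b
    rw [summable_iff_vanishing_norm]
    intro ε hε
    have hb : Tendsto (fun k => b k) cofinite (𝓝 0) := by
      have := b.zero_at_infty'
      rwa [Filter.cocompact_eq_cofinite] at this
    have hη : 0 < ε / (2 * K + 1) := by positivity
    have := hb.eventually (Metric.ball_mem_nhds 0 hη)
    have hfin : {k | ¬ (b k ∈ Metric.ball (0:ℝ) (ε / (2 * K + 1)))}.Finite := this
    refine ⟨hfin.toFinset, fun t ht => ?_⟩
    refine (wuc_bound hz t (fun k => b k) hη.le ?_).trans_lt ?_
    · intro k hk
      have h1 := Finset.disjoint_left.1 ht hk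
      simp at h1
      exact h1.le
    · rw [div_mul_eq_mul_div, div_lt_iff₀ (by positivity)]
      nlinarith
  refine ⟨{ toFun := fun b => ∑' k, b k • z k, map_add' := ?_, map_smul' := ?_ }, δ,
    2 * K + 1, hδ, by positivity, ?_⟩
  · intro b b'
    rw [← (hsum b).tsum_add (hsum b')]
    simp [add_smul]
  · intro r b
    simp only [RingHom.id_apply]
    rw [← (hsum b).tsum_const_smul r]
    simp [mul_smul]
  · intro b
    simp only [LinearMap.coe_mk, AddHom.coe_mk]
    constructor
    · have hk : ∀ k, δ * |b k| ≤ ‖∑' k, b k • z k‖ := by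
        intro k
        refine le_trans ?_ (hQ k _)
        rw [(Q k).map_tsum (hsum b), tsum_eq_single k]
        · rw [map_smul, norm_smul, mul_comm, Real.norm_eq_abs]
          exact mul_le_mul_of_nonneg_left (hQ1 k) (abs_nonneg _)
        · intro j hj
          rw [map_smul, hQ0 k j hj, smul_zero]
      have : ‖b‖ ≤ ‖∑' k, b k • z k‖ / δ := by
        change ‖b.toBCF‖ ≤ _
        rw [BoundedContinuousFunction.norm_le (by positivity)]
        intro k
        rw [le_div_iff₀ hδ, mul_comm]
        exact hk k
      rw [le_div_iff₀ hδ] at this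
      linarith
    · refine le_of_tendsto (hsum b).hasSum.norm (Eventually.of_forall fun F => ?_)
      refine (wuc_bound hz F (fun k => b k) (norm_nonneg b) fun k _ => hle b k).trans ?_
      nlinarith [norm_nonneg b]

lemma spread_Ico {e : ℕ → X} (hspread : IsOneSpreading e) (a : ℕ → ℝ) (m n p : ℕ) :
    ‖∑ i ∈ Finset.Ico m n, a i • e (i + p)‖ = ‖∑ i ∈ Finset.Ico m n, a i • e i‖ := by
  have := hspread n (fun i => if m ≤ i then a i else 0) (fun i => i + p)
    (fun i j h => by simpa using h)
  have h2 : ∀ g : ℕ → X, ∑ i ∈ Finset.range n, (if m ≤ i then a i else 0) • g i =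
      ∑ i ∈ Finset.Ico m n, a i • g i := by
    intro g
    rw [show Finset.Ico m n = (Finset.range n).filter (fun i => m ≤ i) by
      ext; simp [and_comm], Finset.sum_filter]
    exact Finset.sum_congr rfl fun i _ => by split_ifs <;> simp
  rwa [h2 (fun i => e (i + p)), h2 e] at this

lemma embeds_of_not_bc [CompleteSpace X] {e : ℕ → X} (hbasis : IsSchauderBasis e)
    (hspread : IsOneSpreading e) (hbi : IsBimonotone e) (h : ¬ BoundedlyComplete e) :
    Embeds spaceC0 X := by
  classical
  unfold BoundedlyComplete at h
  push Not at h
  obtain ⟨a, ⟨M, hM⟩, hdiv⟩ := h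
  obtain ⟨δ, n, hδ, hn, hn0, hblock⟩ := exists_blocks
    (fun n => ∑ i ∈ Finset.range n, a i • e i) (by push Not; exact hdiv)
  obtain ⟨c, hc1, hc2, hc3⟩ := exists_coef hbasis hbi
  obtain ⟨κ, hκ1, hκ2, hκ3⟩ := block_index n hn hn0
  have hnle : ∀ k, n k ≤ n (k + 1) := fun k => hn.monotone (Nat.le_succ k)
  set z : ℕ → X := fun k => ∑ i ∈ Finset.Ico (n k) (n (k + 1)),
    a i • (e (i + n k) - e (i + n (k + 1))) with hzdef
  -- interval projections
  let R : ℕ → ℕ → X →L[ℝ] X := fun m p =>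
    LinearMap.mkContinuous
      { toFun := fun x => ∑ i ∈ Finset.Ico m p, c x i • e i
        map_add' := by intro x y; simp [add_smul, Finset.sum_add_distrib]
        map_smul' := by intro r x; simp [mul_smul, Finset.smul_sum] } 1
      (by intro x; simpa using hc3 m p x)
  have hR : ∀ m p x, R m p x = ∑ i ∈ Finset.Ico m p, c x i • e i := fun m p x => rfl
  have hRe : ∀ m p j, R m p (e j) = if m ≤ j ∧ j < p then e j else 0 := by
    intro m p j
    rw [hR]
    simp only [hc2, Pi.single_apply, ite_smul, one_smul, zero_smul]
    rw [Finset.sum_ite_eq']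
    simp [Finset.mem_Ico]
  have hwuc : ∀ F : Finset ℕ, ‖∑ k ∈ F, z k‖ ≤ 2 * M := by
    intro F
    obtain ⟨K, hK⟩ : ∃ K, F ⊆ Finset.range K := F.exists_nat_subset_range
    have spread : ∀ G : Finset ℕ, ‖∑ i ∈ Finset.range (n K),
        a i • e (i + n (if κ i ∈ G then κ i + 1 else κ i))‖ ≤ M := by
      intro G
      refine (hspread (n K) a (fun i => i + n (if κ i ∈ G then κ i + 1 else κ i)) ?_).le.trans
        (hM _)
      intro i j hij
      have hm := hκ3 hij.le
      have hi := hκ1 i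
      have hj := hκ1 j
      have hle1 := hnle (κ i)
      have hle2 := hnle (κ j)
      dsimp only
      rcases hm.eq_or_lt with h' | h'
      · rw [h']; omega
      · have h3 : n (κ i + 1) ≤ n (κ j) := hn.monotone h'
        split_ifs <;> omega
    have hEq : ∑ k ∈ F, z k = ∑ i ∈ Finset.range (n K),
          a i • e (i + n (if κ i ∈ (∅ : Finset ℕ) then κ i + 1 else κ i)) -
        ∑ i ∈ Finset.range (n K), a i • e (i + n (if κ i ∈ F then κ i + 1 else κ i)) := by
      rw [← Finset.sum_sub_distrib, sum_blocks n hn hn0]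
      have : ∀ k ∈ Finset.range K, ∑ i ∈ Finset.Ico (n k) (n (k + 1)),
          (a i • e (i + n (if κ i ∈ (∅ : Finset ℕ) then κ i + 1 else κ i)) -
            a i • e (i + n (if κ i ∈ F then κ i + 1 else κ i))) = if k ∈ F then z k else 0 := by
        intro k _
        have : ∀ i ∈ Finset.Ico (n k) (n (k + 1)),
          (a i • e (i + n (if κ i ∈ (∅ : Finset ℕ) then κ i + 1 else κ i)) -
            a i • e (i + n (if κ i ∈ F then κ i + 1 else κ i))) =
            if k ∈ F then a i • (e (i + n k) - e (i + n (k + 1))) else 0 := by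
          intro i hi
          rw [Finset.mem_Ico] at hi
          rw [hκ2 i k hi.1 hi.2]
          split_ifs <;> simp_all [smul_sub]
        rw [Finset.sum_congr rfl this]
        split_ifs <;> simp [hzdef]
      rw [Finset.sum_congr rfl this, ← Finset.sum_filter]
      apply Finset.sum_congr _ fun _ _ => rfl
      ext k
      simp only [Finset.mem_filter]
      exact ⟨fun h => ⟨hK h, h⟩, fun h => h.2⟩
    rw [hEq]
    refine (norm_sub_le _ _).trans ?_
    linarith [spread ∅, spread F]
  have hRz : ∀ k j, R (2 * n k) (n k + n (k + 1)) (z j) =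
      if j = k then ∑ i ∈ Finset.Ico (n k) (n (k + 1)), a i • e (i + n k) else 0 := by
    intro k j
    simp only [hzdef, map_sum, map_smul, map_sub, hRe]
    split_ifs with hjk
    · subst hjk
      apply Finset.sum_congr rfl
      intro i hi
      rw [Finset.mem_Ico] at hi
      rw [if_pos (by omega), if_neg (by omega), sub_zero]
    · apply Finset.sum_eq_zero
      intro i hi
      rw [Finset.mem_Ico] at hi
      have h1 := hnle j
      have h2 := hnle k
      rcases lt_or_gt_of_ne hjk with h' | h'
      · have h3 : n (j + 1) ≤ n k := hn.monotone h'
        rw [if_neg (by omega), if_neg (by omega), sub_zero, smul_zero]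
      · have h3 : n (k + 1) ≤ n j := hn.monotone h'
        rw [if_neg (by omega), if_neg (by omega), sub_zero, smul_zero]
  refine embeds_of_wuc hδ hwuc (fun k => R (2 * n k) (n k + n (k + 1))) ?_ ?_ ?_
  · intro k x; exact hc3 _ _ x
  · intro k j hj; rw [hRz, if_neg hj]
  · intro k
    rw [hRz, if_pos rfl, spread_Ico hspread]
    refine (hblock k).trans (le_of_eq ?_)
    rw [Finset.sum_Ico_eq_sub _ (hnle k)]

/-- unit vectors of `c₀` -/
noncomputable def unitC0 (n : ℕ) : spaceC0 where
  toFun := fun i => if i = n then 1 else 0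
  continuous_toFun := continuous_of_discreteTopology
  zero_at_infty' := by
    rw [Filter.cocompact_eq_cofinite]
    apply tendsto_const_nhds.congr'
    filter_upwards [(Set.finite_singleton n).compl_mem_cofinite] with i hi
    simp at hi
    simp [hi]

lemma unitC0_apply (n i : ℕ) : unitC0 n i = if i = n then 1 else 0 := rfl

lemma norm_sum_unit (F : Finset ℕ) : ‖∑ n ∈ F, unitC0 n‖ ≤ 1 := by
  change ‖(∑ n ∈ F, unitC0 n).toBCF‖ ≤ _
  rw [BoundedContinuousFunction.norm_le zero_le_one]
  intro i
  change ‖(∑ n ∈ F, unitC0 n) i‖ ≤ 1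
  have : (∑ n ∈ F, unitC0 n) i = ∑ n ∈ F, unitC0 n i := by
    classical
    induction F using Finset.induction_on with
    | empty => simp
    | insert a s ha ih => simp [Finset.sum_insert ha, ih]
  rw [this]
  simp only [unitC0_apply, Finset.sum_ite_eq]
  split_ifs <;> simp

lemma one_le_norm_unit (n : ℕ) : 1 ≤ ‖unitC0 n‖ := by
  have := (unitC0 n).toBCF.norm_coe_le_norm n
  change ‖unitC0 n n‖ ≤ ‖unitC0 n‖ at this
  simpa [unitC0_apply] using this

lemma not_embeds_of_bc {e : ℕ → X} (hnorm : ∀ i, ‖e i‖ = 1) (hbasis : IsSchauderBasis e)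
    (hbi : IsBimonotone e) (h : BoundedlyComplete e) : ¬ Embeds spaceC0 X := by
  classical
  rintro ⟨T, d, C, hd, hC, hT⟩
  obtain ⟨c, hc1, hc2, hc3⟩ := exists_coef hbasis hbi
  set x : ℕ → X := fun n => T (unitC0 n) with hx
  have hxd : ∀ n, d ≤ ‖x n‖ := fun n => by
    have := (hT (unitC0 n)).1
    nlinarith [one_le_norm_unit n]
  have hxC : ∀ F : Finset ℕ, ‖∑ n ∈ F, x n‖ ≤ C := fun F => by
    have := (hT (∑ n ∈ F, unitC0 n)).2
    rw [map_sum] at this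
    nlinarith [norm_sum_unit F]
  have hcoef : ∀ i y, |c y i| ≤ ‖y‖ := fun i y => by
    have := hc3 i (i + 1) y
    simpa [norm_smul, hnorm] using this
  have hnull : ∀ i, Tendsto (fun n => c (x n) i) atTop (𝓝 0) := by
    intro i
    have hs : Summable (fun n => |c (x n) i|) :=
      summable_of_sum_le (fun _ => abs_nonneg _)
        (fun F => wuc_abs hxC ((LinearMap.proj i).comp c) (hcoef i) F)
    exact (tendsto_zero_iff_abs_tendsto_zero _).2 hs.tendsto_atTop_zero
  have hP : ∀ m, Tendsto (fun n => ∑ i ∈ Finset.range m, c (x n) i • e i) atTop (𝓝 0) := by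
    intro m
    have : Tendsto (fun n => ∑ i ∈ Finset.range m, c (x n) i • e i) atTop
        (𝓝 (∑ i ∈ Finset.range m, (0 : ℝ) • e i)) :=
      tendsto_finsetSum _ fun i _ => (hnull i).smul_const (e i)
    simpa using this
  have step : ∀ (k : ℕ) (s : ℕ × ℕ), ∃ t : ℕ × ℕ, s.1 < t.1 ∧ s.2 < t.2 ∧
      ‖x t.1 - ∑ i ∈ Finset.Ico s.2 t.2, c (x t.1) i • e i‖ ≤ d / 4 * (1 / 2) ^ k := by
    rintro k ⟨n₀, m⟩
    have hε : 0 < d / 4 * (1 / 2) ^ k / 2 := by positivity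
    obtain ⟨n, hn1, hn2⟩ := (((hP m).eventually (Metric.ball_mem_nhds 0 hε)).and
      (eventually_gt_atTop n₀)).exists
    obtain ⟨m', hm1, hm2⟩ := (((hc1 (x n)).eventually (Metric.ball_mem_nhds _ hε)).and
      (eventually_gt_atTop m)).exists
    refine ⟨(n, m'), hn2, hm2, ?_⟩
    rw [dist_eq_norm] at hn1 hm1
    rw [sub_zero] at hn1
    dsimp only
    rw [Finset.sum_Ico_eq_sub _ hm2.le]
    rw [norm_sub_rev] at hm1
    calc _ = ‖(x n - ∑ i ∈ Finset.range m', c (x n) i • e i) +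
          ∑ i ∈ Finset.range m, c (x n) i • e i‖ := by congr 1; abel
      _ ≤ _ := norm_add_le _ _
      _ ≤ _ := by linarith
  choose g hg1 hg2 hg3 using step
  let s : ℕ → ℕ × ℕ := fun k => Nat.rec (0, 0) (fun k t => g k t) k
  have hs : ∀ k, s (k + 1) = g k (s k) := fun k => rfl
  have hn : StrictMono (fun k => (s k).1) :=
    strictMono_nat_of_lt_succ fun k => by rw [hs]; exact hg1 _ _
  have hm : StrictMono (fun k => (s k).2) :=
    strictMono_nat_of_lt_succ fun k => by rw [hs]; exact hg2 _ _
  obtain ⟨κ, hκ1, hκ2, hκ3⟩ := block_index (fun k => (s k).2) hm rfl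
  set a : ℕ → ℝ := fun i => c (x (s (κ i + 1)).1) i with ha
  have hablock : ∀ k, ‖x (s (k + 1)).1 - ∑ i ∈ Finset.Ico (s k).2 (s (k + 1)).2, a i • e i‖ ≤
      d / 4 * (1 / 2) ^ k := by
    intro k
    have : ∑ i ∈ Finset.Ico (s k).2 (s (k + 1)).2, a i • e i =
        ∑ i ∈ Finset.Ico (s k).2 (s (k + 1)).2, c (x (s (k + 1)).1) i • e i := by
      apply Finset.sum_congr rfl
      intro i hi
      rw [Finset.mem_Ico] at hi
      rw [ha]
      dsimp only
      rw [hκ2 i k hi.1 hi.2]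
    rw [this]
    exact hg3 k (s k)
  have hgeo : ∀ K : ℕ, ∑ k ∈ Finset.range K, d / 4 * (1 / 2 : ℝ) ^ k ≤ d / 2 := by
    intro K
    rw [← Finset.mul_sum]
    have : ∑ k ∈ Finset.range K, (1 / 2 : ℝ) ^ k ≤ 2 := sum_geometric_two_le K
    nlinarith
  have hbdd : ∀ N, ‖∑ i ∈ Finset.range N, a i • e i‖ ≤ C + d / 2 := by
    intro N
    have h1 := bimono_Ico hbi a (m := 0) (hm.le_apply (x := N))
    rw [← Finset.range_eq_Ico] at h1
    refine h1.trans ?_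
    rw [sum_blocks (fun k => (s k).2) hm rfl]
    have hx1 : ‖∑ k ∈ Finset.range N, x (s (k + 1)).1‖ ≤ C := by
      have hinj : Function.Injective (fun k => (s (k + 1)).1) := fun i j hij => by
        have := hn.injective (a₁ := i + 1) (a₂ := j + 1) hij
        omega
      have := hxC ((Finset.range N).image (fun k => (s (k + 1)).1))
      rwa [Finset.sum_image hinj.injOn] at this
    have hx2 : ‖∑ k ∈ Finset.range N, (x (s (k + 1)).1 -
        ∑ i ∈ Finset.Ico (s k).2 (s (k + 1)).2, a i • e i)‖ ≤ d / 2 :=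
      (norm_sum_le _ _).trans ((Finset.sum_le_sum fun k _ => hablock k).trans (hgeo N))
    rw [Finset.sum_sub_distrib] at hx2
    have h3 := norm_sub_norm_le (∑ k ∈ Finset.range N,
      ∑ i ∈ Finset.Ico (s k).2 (s (k + 1)).2, a i • e i) (∑ k ∈ Finset.range N, x (s (k + 1)).1)
    rw [norm_sub_rev] at h3
    linarith
  obtain ⟨y, hy⟩ := h a ⟨_, hbdd⟩
  have ht1 := hy.comp hm.tendsto_atTop
  have ht2 := ht1.comp (tendsto_add_atTop_nat 1)
  have ht3 := (ht2.sub ht1).norm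
  rw [sub_self, norm_zero] at ht3
  obtain ⟨k, hk⟩ := (ht3.eventually (gt_mem_nhds (show 0 < d / 2 by linarith))).exists
  simp only [Function.comp] at hk
  rw [← Finset.sum_Ico_eq_sub _ (hm.monotone (Nat.le_succ k))] at hk
  have h4 := hablock k
  have h5 : d / 4 * (1 / 2 : ℝ) ^ k ≤ d / 4 := by
    have : (1 / 2 : ℝ) ^ k ≤ 1 := pow_le_one₀ (by norm_num) (by norm_num)
    nlinarith
  have h6 := norm_sub_norm_le (x (s (k + 1)).1)
    (∑ i ∈ Finset.Ico (s k).2 (s (k + 1)).2, a i • e i)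
  have h7 := hxd (s (k + 1)).1
  linarith

end BCNoC0

theorem boundedly_complete_iff_no_c0
    {X : Type} [NormedAddCommGroup X] [NormedSpace ℝ X] [CompleteSpace X]
    (e : ℕ → X) (hnorm : ∀ i, ‖e i‖ = 1) (hbasis : IsSchauderBasis e)
    (hspread : IsOneSpreading e) (hbi : IsBimonotone e) (hnwn : ¬ WeaklyNull e) :
    BoundedlyComplete e ↔ ¬ Embeds spaceC0 X := by
  constructor
  · exact BCNoC0.not_embeds_of_bc hnorm hbasis hbi
  · intro h
    by_contra hb
    exact h (BCNoC0.embeds_of_not_bc hbasis hspread hbi hb)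
end

section
/- Let (x_i) be a normalized weakly null Schauder basis for a Banach space X. Assume that ℓ1 does not embed into X and that whenever (y_i) is a normalized weakly null block basis of (x_i) having a spreading model (e_i), then ‖e_1 − e_2‖ = 1. Then some subsequence of (x_i) is equivalent to the unit vector basis of c0. -/
open Filter Finset Topology NormedSpace
open scoped NNReal

/-- `x` is a block basis of `e`: each `x j` is a nonzero vector finitely supported on an
interval of indices, with successive supports strictly increasing. -/
def IsBlockBasis {X : Type} [NormedAddCommGroup X] [NormedSpace ℝ X]
    (e : ℕ → X) (x : ℕ → X) : Prop :=
  ∃ (a : ℕ → ℕ → ℝ) (p q : ℕ → ℕ),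
    (∀ j, x j = ∑ i ∈ Finset.Icc (p j) (q j), a j i • e i) ∧
    (∀ j, x j ≠ 0) ∧ (∀ j, p j ≤ q j) ∧ (∀ j, q j < p (j + 1))

/-- The space `ℓ¹`. -/
noncomputable abbrev ellOne : Type := lp (fun _ : ℕ => ℝ) 1

/-- The sequence `x` is equivalent to the unit vector basis of `c₀`. -/
def EquivC0Basis {X : Type} [NormedAddCommGroup X] [NormedSpace ℝ X] (x : ℕ → X) : Prop :=
  ∃ C : ℝ, 1 ≤ C ∧ ∀ (k : ℕ) (a : ℕ → ℝ),
    C⁻¹ * (((Finset.range k).sup fun i => ‖a i‖₊ : ℝ≥0) : ℝ) ≤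
        ‖∑ i ∈ Finset.range k, a i • x i‖ ∧
    ‖∑ i ∈ Finset.range k, a i • x i‖ ≤
      C * (((Finset.range k).sup fun i => ‖a i‖₊ : ℝ≥0) : ℝ)

/-- `e` (in a Banach space `E`) is a spreading model of the sequence `y`. -/
def IsSpreadingModel {X E : Type} [NormedAddCommGroup X] [NormedSpace ℝ X]
    [NormedAddCommGroup E] [NormedSpace ℝ E] (y : ℕ → X) (e : ℕ → E) : Prop :=
  ∃ ε : ℕ → ℝ, Antitone ε ∧ Tendsto ε atTop (𝓝 (0 : ℝ)) ∧
    ∀ (n : ℕ) (a : ℕ → ℝ), (∀ i < n, |a i| ≤ 1) →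
      ∀ k : ℕ → ℕ, StrictMono k → n ≤ k 0 →
        |‖∑ i ∈ Finset.range n, a i • y (k i)‖ - ‖∑ i ∈ Finset.range n, a i • e i‖| ≤ ε n



namespace C0SM

/-- initial segment of `P` below `k` -/
noncomputable def ini (P : Set ℕ) (k : ℕ) : Finset ℕ :=
  open Classical in (Finset.range k).filter (fun i => i ∈ P)

theorem mem_ini {P : Set ℕ} {k i : ℕ} : i ∈ ini P k ↔ i < k ∧ i ∈ P := by
  simp [ini]

/-- elements of `N` above all of `u` -/
def above (N : Set ℕ) (u : Finset ℕ) : Set ℕ := {a | a ∈ N ∧ ∀ i ∈ u, i < a}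

theorem above_sub (N : Set ℕ) (u : Finset ℕ) : above N u ⊆ N := fun _ h => h.1

theorem above_inf {N : Set ℕ} (hN : N.Infinite) (u : Finset ℕ) : (above N u).Infinite := by
  have : N ⊆ above N u ∪ (Finset.range (u.sup id + 1) : Finset ℕ) := by
    intro a ha
    by_cases h : ∀ i ∈ u, i < a
    · exact Or.inl ⟨ha, h⟩
    · right
      push Not at h
      obtain ⟨i, hi, hai⟩ := h
      have : i ≤ u.sup id := Finset.le_sup (f := id) hi
      simp
      omega
  by_contra hc
  rw [Set.not_infinite] at hc
  exact hN ((hc.union (Finset.finite_toSet _)).subset this)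

theorem fusion_finset (D : Finset ℕ → Set ℕ → Prop)
    (hD : ∀ u L L', L' ⊆ L → D u L → D u L')
    (hex : ∀ u M, M.Infinite → ∃ L ⊆ M, L.Infinite ∧ D u L)
    (U : Finset (Finset ℕ)) (M : Set ℕ) (hM : M.Infinite) :
    ∃ L ⊆ M, L.Infinite ∧ ∀ u ∈ U, D u L := by
  classical
  induction U using Finset.induction_on with
  | empty => exact ⟨M, subset_rfl, hM, by simp⟩
  | insert u U _ ih =>
    obtain ⟨L, hL, hLi, hLD⟩ := ih
    obtain ⟨L', hL', hLi', hLD'⟩ := hex u L hLi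
    refine ⟨L', hL'.trans hL, hLi', ?_⟩
    intro v hv
    rcases Finset.mem_insert.1 hv with rfl | hv
    · exact hLD'
    · exact hD _ _ _ hL' (hLD v hv)

theorem fusion (D : Finset ℕ → Set ℕ → Prop)
    (hD : ∀ u L L', L' ⊆ L → D u L → D u L')
    (hex : ∀ u M, M.Infinite → ∃ L ⊆ M, L.Infinite ∧ D u L)
    (M : Set ℕ) (hM : M.Infinite) :
    ∃ N ⊆ M, N.Infinite ∧ ∀ u : Finset ℕ, (u : Set ℕ) ⊆ N → D u (above N u) := by
  classical
  obtain ⟨L0, hL0, hL0i, hL0D⟩ := hex ∅ M hM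
  have step : ∀ L : {L : Set ℕ // L.Infinite}, ∃ L' : {L : Set ℕ // L.Infinite},
      L'.1 ⊆ L.1 ∧ (∀ a ∈ L'.1, sInf L.1 < a) ∧
      ∀ u ∈ (Finset.range (sInf L.1 + 1)).powerset, D u L'.1 := by
    intro L
    obtain ⟨L', h1, h2, h3⟩ := fusion_finset D hD hex (Finset.range (sInf L.1 + 1)).powerset
      (above L.1 {sInf L.1}) (above_inf L.2 _)
    refine ⟨⟨L', h2⟩, h1.trans (above_sub _ _), ?_, h3⟩
    intro a ha
    exact (h1 ha).2 _ (by simp)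
  choose g hg1 hg2 hg3 using step
  let A : ℕ → {L : Set ℕ // L.Infinite} := fun n => g^[n] ⟨L0, hL0i⟩
  have hA : ∀ n, A (n+1) = g (A n) := fun n => Function.iterate_succ_apply' g n _
  let c : ℕ → ℕ := fun n => sInf (A n).1
  have hcA : ∀ n, c n ∈ (A n).1 := fun n => Nat.sInf_mem (A n).2.nonempty
  have hanti : ∀ m n, m ≤ n → (A n).1 ⊆ (A m).1 := by
    intro m n h
    induction n, h using Nat.le_induction with
    | base => exact subset_rfl
    | succ n _ ih => rw [hA]; exact (hg1 _).trans ih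
  have hmono : StrictMono c := by
    apply strictMono_nat_of_lt_succ
    intro n
    have := hcA (n+1)
    rw [hA] at this
    exact hg2 _ _ this
  refine ⟨Set.range c, ?_, Set.infinite_range_of_injective hmono.injective, ?_⟩
  · rintro _ ⟨n, rfl⟩
    exact hL0 (hanti 0 n (Nat.zero_le _) (hcA n))
  · intro u hu
    rcases u.eq_empty_or_nonempty with rfl | hne
    · refine hD _ _ _ ?_ hL0D
      rintro _ ⟨⟨n, rfl⟩, -⟩
      exact hanti 0 n (Nat.zero_le _) (hcA n)
    · obtain ⟨n, hn⟩ := hu (Finset.max'_mem u hne)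
      have h1 : D u (A (n+1)).1 := by
        rw [hA]
        apply hg3
        rw [Finset.mem_powerset]
        intro i hi
        have := Finset.le_max' u i hi
        rw [← hn] at this
        exact Finset.mem_range.2 (Nat.lt_succ_of_le this)
      refine hD _ _ _ ?_ h1
      rintro _ ⟨⟨m, rfl⟩, hm⟩
      have : c n < c m := by rw [hn]; exact hm _ (Finset.max'_mem u hne)
      exact hanti (n+1) m (hmono.lt_iff_lt.1 this) (hcA m)

theorem galvin (F : Set (Finset ℕ)) (M : Set ℕ) (hM : M.Infinite) :
    ∃ N ⊆ M, N.Infinite ∧ ((∀ s : Finset ℕ, (s : Set ℕ) ⊆ N → s ∉ F) ∨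
      (∀ P ⊆ N, P.Infinite → ∃ k, ini P k ∈ F)) := by
  classical
  let acc : Finset ℕ → Set ℕ → Prop := fun u L =>
    ∀ P ⊆ L, P.Infinite → (∀ i ∈ u, ∀ p ∈ P, i < p) → ∃ k, ini (↑u ∪ P) k ∈ F
  have hacc : ∀ u L L', L' ⊆ L → acc u L → acc u L' := fun u L L' h h1 P hP => h1 P (hP.trans h)
  let rej : Finset ℕ → Set ℕ → Prop := fun u L => ∀ L' ⊆ L, L'.Infinite → ¬ acc u L'
  have hrej : ∀ u L L', L' ⊆ L → rej u L → rej u L' := fun u L L' h h1 P hP => h1 P (hP.trans h)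
  obtain ⟨N, hNM, hNi, hN⟩ := fusion (fun u L => acc u L ∨ rej u L)
    (fun u L L' h h1 => h1.imp (hacc u L L' h) (hrej u L L' h)) (by
      intro u M hM
      by_cases h : rej u M
      · exact ⟨M, subset_rfl, hM, Or.inr h⟩
      · simp only [rej] at h
        push Not at h
        obtain ⟨L, h1, h2, h3⟩ := h
        exact ⟨L, h1, h2, Or.inl h3⟩) M hM
  have habove0 : above N ∅ = N := by ext; simp [above]
  rcases hN ∅ (by simp) with h0 | h0
  · refine ⟨N, hNM, hNi, Or.inr ?_⟩
    intro P hP hPi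
    have := h0 P (by rw [habove0]; exact hP) hPi (by simp)
    simpa using this
  · have key : ∀ u : Finset ℕ, (u : Set ℕ) ⊆ N → rej u (above N u) →
        {a | a ∈ above N u ∧ acc (insert a u) (above N (insert a u))}.Finite := by
      intro u hu hr
      by_contra hinf
      refine hr _ (fun a ha => ha.1) hinf ?_
      intro P hP hPi hPu
      have hm := Nat.sInf_mem hPi.nonempty
      set a := sInf P with ha
      obtain ⟨h1, h2⟩ := hP hm
      have hsub : above P {a} ⊆ above N (insert a u) := by
        rintro b ⟨hb, hb2⟩
        refine ⟨(hP hb).1.1, ?_⟩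
        intro i hi
        rcases Finset.mem_insert.1 hi with rfl | hi
        · exact hb2 _ (by simp)
        · exact hPu i hi b hb
      obtain ⟨k, hk⟩ := h2 (above P {a}) hsub (above_inf hPi _) (by
        intro i hi p hp
        exact (hsub hp).2 i hi)
      refine ⟨k, ?_⟩
      have : (↑(insert a u) : Set ℕ) ∪ above P {a} = ↑u ∪ P := by
        ext b
        simp only [Finset.coe_insert, Set.mem_union, Set.mem_insert_iff, Finset.mem_coe, above,
          Finset.mem_singleton, forall_eq, Set.mem_ofPred_eq]
        constructor
        · rintro ((rfl | h) | h)
          · exact Or.inr hm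
          · exact Or.inl h
          · exact Or.inr h.1
        · rintro (h | h)
          · exact Or.inl (Or.inr h)
          · have : a ≤ b := Nat.sInf_le h
            rcases this.eq_or_lt with h' | h'
            · exact Or.inl (Or.inl h'.symm)
            · exact Or.inr ⟨h, h'⟩
      rw [← this]; exact hk
    obtain ⟨N', hN'N, hN'i, hN'⟩ := fusion (fun u L => (u : Set ℕ) ⊆ N → rej u (above N u) →
        ∀ a ∈ L, a ∈ above N u → rej (insert a u) (above N (insert a u)))
      (fun u L L' h h1 h2 h3 a ha h5 => h1 h2 h3 a (h ha) h5) (by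
      intro u M hM
      by_cases h : (u : Set ℕ) ⊆ N ∧ rej u (above N u)
      · have hf := key u h.1 h.2
        refine ⟨M \ {a | a ∈ above N u ∧ acc (insert a u) (above N (insert a u))}, Set.sdiff_subset,
          hM.sdiff hf, ?_⟩
        intro h1 h2 a ha haN
        have h3 : (↑(insert a u) : Set ℕ) ⊆ N := by
          rw [Finset.coe_insert]
          exact Set.insert_subset haN.1 h1
        rcases hN (insert a u) h3 with h4 | h4
        · exact absurd ⟨haN, h4⟩ ha.2
        · exact h4
      · exact ⟨M, subset_rfl, hM, fun h1 h2 => absurd ⟨h1, h2⟩ h⟩) N hNi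
    have all : ∀ u : Finset ℕ, (u : Set ℕ) ⊆ N' → rej u (above N u) := by
      intro u
      induction u using Finset.induction_on_max with
      | empty => intro _; exact h0
      | insert a u hlt ih =>
        intro hu
        rw [Finset.coe_insert, Set.insert_subset_iff] at hu
        have h1 := ih hu.2
        exact hN' u hu.2 (hu.2.trans hN'N) h1 a ⟨hu.1, hlt⟩ ⟨hN'N hu.1, hlt⟩
    refine ⟨N', hN'N.trans hNM, hN'i, Or.inl ?_⟩
    intro s hs hsF
    refine all s hs (above N s) subset_rfl (above_inf hNi _) ?_
    intro P hP _ hlt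
    have hk : ∃ k, (∀ i ∈ s, i < k) ∧ ∀ p ∈ P, k ≤ p := by
      rcases s.eq_empty_or_nonempty with rfl | hne
      · exact ⟨0, by simp, by simp⟩
      · refine ⟨s.max' hne + 1, fun i hi => Nat.lt_succ_of_le (Finset.le_max' s i hi), ?_⟩
        intro p hp
        exact hlt _ (Finset.max'_mem s hne) p hp
    obtain ⟨k, hk1, hk2⟩ := hk
    refine ⟨k, ?_⟩
    have : ini (↑s ∪ P) k = s := by
      ext i
      simp only [mem_ini, Set.mem_union, Finset.mem_coe]
      constructor
      · rintro ⟨h1, h2 | h2⟩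
        · exact h2
        · exact absurd (hk2 i h2) (by omega)
      · intro h
        exact ⟨hk1 i h, Or.inl h⟩
    rw [this]; exact hsF

/-- successive sets -/
def Succv (t : ℕ → Finset ℕ) : Prop := ∀ i j, i < j → ∀ a ∈ t i, ∀ b ∈ t j, a < b

theorem seqBuild (Q : ℕ → Finset ℕ → Prop)
    (hQ : ∀ i b, ∃ s, Q i s ∧ ∀ a ∈ s, b < a) : ∃ t, Succv t ∧ ∀ i, Q i (t i) := by
  choose g hg1 hg2 using hQ
  let b : ℕ → ℕ := fun n => Nat.rec 0 (fun i b => max b ((g i b).sup id)) n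
  have hb : ∀ n, b (n+1) = max (b n) ((g n (b n)).sup id) := fun n => rfl
  have hbm : Monotone b := monotone_nat_of_le_succ fun n => by rw [hb]; exact le_max_left _ _
  refine ⟨fun n => g n (b n), ?_, fun i => hg1 _ _⟩
  intro i j hij a ha c hc
  have h1 : a ≤ (g i (b i)).sup id := Finset.le_sup (f := id) ha
  have h2 : (g i (b i)).sup id ≤ b (i+1) := by rw [hb]; exact le_max_right _ _
  have h3 := hbm hij
  have h4 := hg2 j (b j) c hc
  simp only [Nat.succ_eq_add_one] at h3
  omega

/-- sequences of successive blocks from `B` inside `N` -/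
def BSeq (B : Set (Finset ℕ)) (N : Set ℕ) (t : ℕ → Finset ℕ) : Prop :=
  Succv t ∧ ∀ i, t i ∈ B ∧ (t i : Set ℕ) ⊆ N

def Thin (B : Set (Finset ℕ)) : Prop :=
  (∀ s ∈ B, s.Nonempty) ∧ ∀ s ∈ B, ∀ t ∈ B, ∀ b, s = t.filter (· < b) → s = t

def Front (B : Set (Finset ℕ)) (N : Set ℕ) : Prop :=
  ∀ P ⊆ N, P.Infinite → ∃ k, ini P k ∈ B

theorem decomp_unique {B : Set (Finset ℕ)} (hB : Thin B) (t t' : ℕ → Finset ℕ)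
    (ht : Succv t) (ht' : Succv t') (htB : ∀ i, t i ∈ B) (htB' : ∀ i, t' i ∈ B) (n k : ℕ)
    (h : (Finset.range n).biUnion t = ini (⋃ i, (t' i : Set ℕ)) k) :
    ∀ i < n, t i = t' i := by
  intro i
  induction i using Nat.strong_induction_on with
  | _ i ih =>
  intro hi
  have hmem : ∀ p, (∃ m < n, p ∈ t m) ↔ p < k ∧ ∃ j, p ∈ t' j := by
    intro p
    have := Finset.ext_iff.1 h p
    simpa [mem_ini] using this
  have hne := hB.1 _ (htB i)
  have hne' := hB.1 _ (htB' i)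
  set b := (t i).max' hne with hbd
  set b' := (t' i).max' hne' with hbd'
  have hb : b ∈ t i := Finset.max'_mem _ _
  have hb' : b' ∈ t' i := Finset.max'_mem _ _
  have hle : ∀ p ∈ t i, p ≤ b := fun p hp => Finset.le_max' _ p hp
  have hle' : ∀ p ∈ t' i, p ≤ b' := fun p hp => Finset.le_max' _ p hp
  have A : ∀ p ∈ t i, p ≤ b' → p ∈ t' i := by
    intro p hp hpb
    obtain ⟨_, j, hj⟩ := (hmem p).1 ⟨i, hi, hp⟩
    rcases lt_trichotomy j i with hji | rfl | hji
    · rw [← ih j hji (hji.trans hi)] at hj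
      exact absurd (ht j i hji p hj p hp) (lt_irrefl _)
    · exact hj
    · have := ht' i j hji b' hb' p hj
      omega
  have A' : ∀ p ∈ t' i, p ≤ b → p ∈ t i := by
    intro p hp hpb
    have hbk := ((hmem b).1 ⟨i, hi, hb⟩).1
    obtain ⟨j, hjn, hj⟩ := (hmem p).2 ⟨by omega, i, hp⟩
    rcases lt_trichotomy j i with hji | rfl | hji
    · rw [ih j hji (hji.trans hi)] at hj
      exact absurd (ht' j i hji p hj p hp) (lt_irrefl _)
    · exact hj
    · have := ht i j hji b hb p hj
      omega
  rcases le_total b b' with hbb | hbb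
  · apply hB.2 _ (htB i) _ (htB' i) (b + 1)
    ext p
    simp only [Finset.mem_filter]
    constructor
    · intro hp
      have := hle p hp
      exact ⟨A p hp (by omega), by omega⟩
    · rintro ⟨hp, hpb⟩
      exact A' p hp (by omega)
  · symm
    apply hB.2 _ (htB' i) _ (htB i) (b' + 1)
    ext p
    simp only [Finset.mem_filter]
    constructor
    · intro hp
      have := hle' p hp
      exact ⟨A' p hp (by omega), by omega⟩
    · rintro ⟨hp, hpb⟩
      exact A p hp (by omega)

theorem block_ramsey {B : Set (Finset ℕ)} (hB : Thin B)
    (bad : ℕ → (ℕ → Finset ℕ) → Prop)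
    (hbad : ∀ n t t', (∀ i < n, t i = t' i) → bad n t → bad n t')
    (M : Set ℕ) (hM : M.Infinite) :
    ∃ N ⊆ M, N.Infinite ∧ ((∀ t, BSeq B N t → ∀ n, ¬ bad n t) ∨
      (∀ t, BSeq B N t → ∃ n, bad n t)) := by
  obtain ⟨N, hNM, hNi, h⟩ := galvin
    {s | ∃ n t, Succv t ∧ (∀ i, t i ∈ B) ∧ bad n t ∧ s = (Finset.range n).biUnion t} M hM
  refine ⟨N, hNM, hNi, h.imp ?_ ?_⟩
  · intro h t ht n hb
    refine h ((Finset.range n).biUnion t) ?_ ⟨n, t, ht.1, fun i => (ht.2 i).1, hb, rfl⟩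
    intro a ha
    simp only [Finset.coe_biUnion, Set.mem_iUnion] at ha
    obtain ⟨i, _, hi⟩ := ha
    exact (ht.2 i).2 hi
  · intro h t ht
    have hinf : (⋃ i, (t i : Set ℕ)).Infinite := by
      choose c hc using fun i => hB.1 _ (ht.2 i).1
      have : StrictMono c := fun i j hij => ht.1 i j hij _ (hc i) _ (hc j)
      refine (Set.infinite_range_of_injective this.injective).mono ?_
      rintro _ ⟨i, rfl⟩
      exact Set.mem_iUnion.2 ⟨i, hc i⟩
    obtain ⟨k, n, t', h1, h2, h3, h4⟩ := h _ (Set.iUnion_subset fun i => (ht.2 i).2) hinf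
    exact ⟨n, hbad n t' t (decomp_unique hB t' t h1 ht.1 h2 (fun i => (ht.2 i).1) n k h4.symm) h3⟩

theorem front_block {B : Set (Finset ℕ)} {N : Set ℕ} (hF : Front B N) (L : Set ℕ) (hLN : L ⊆ N)
    (hL : L.Infinite) (b : ℕ) : ∃ s, (s ∈ B ∧ (s : Set ℕ) ⊆ L) ∧ ∀ a ∈ s, b < a := by
  obtain ⟨k, hk⟩ := hF (above L {b}) ((above_sub _ _).trans hLN) (above_inf hL _)
  refine ⟨_, ⟨hk, ?_⟩, ?_⟩
  · intro a ha
    exact (mem_ini.1 ha).2.1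
  · intro a ha
    exact (mem_ini.1 ha).2.2 b (by simp)

theorem exists_bseq {B : Set (Finset ℕ)} {N : Set ℕ} (hF : Front B N) (hN : N.Infinite) :
    ∃ t, BSeq B N t :=
  seqBuild (fun _ s => s ∈ B ∧ (s : Set ℕ) ⊆ N) fun _ b => front_block hF N subset_rfl hN b

/-- finite Ramsey-type theorem for tuples -/
theorem ramsey_tuple (n : ℕ) (O : (ℕ → ℕ) → Prop)
    (hO : ∀ k k', (∀ i < n, k i = k' i) → O k → O k') (M : Set ℕ) (hM : M.Infinite) :
    ∃ N ⊆ M, N.Infinite ∧ ((∀ k, StrictMono k → (∀ i, k i ∈ N) → ¬ O k) ∨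
      (∀ k, StrictMono k → (∀ i, k i ∈ N) → O k)) := by
  have hB : Thin {s : Finset ℕ | ∃ a, s = {a}} := by
    constructor
    · rintro _ ⟨a, rfl⟩; simp
    · rintro _ ⟨a, rfl⟩ _ ⟨c, rfl⟩ b h
      have : a ∈ ({c} : Finset ℕ).filter (· < b) := by rw [← h]; simp
      simp at this
      simp [this.1]
  obtain ⟨N, hNM, hNi, h⟩ := block_ramsey hB (fun m t => m = n ∧ O (fun i => (t i).sup id))
    (by
      rintro m t t' h ⟨rfl, h2⟩
      exact ⟨rfl, hO _ _ (fun i hi => by rw [h i hi]) h2⟩) M hM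
  refine ⟨N, hNM, hNi, ?_⟩
  have conv : ∀ k : ℕ → ℕ, StrictMono k → (∀ i, k i ∈ N) →
      BSeq {s : Finset ℕ | ∃ a, s = {a}} N (fun i => {k i}) := by
    intro k hk hkN
    refine ⟨?_, fun i => ⟨⟨_, rfl⟩, by simpa using hkN i⟩⟩
    intro i j hij a ha b hb
    simp at ha hb
    subst ha hb
    exact hk hij
  refine h.imp ?_ ?_
  · intro h k hk hkN hok
    exact h _ (conv k hk hkN) n ⟨rfl, by simpa using hok⟩
  · intro h k hk hkN
    obtain ⟨m, rfl, h2⟩ := h _ (conv k hk hkN)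
    simpa using h2

/-- oscillation version -/
theorem ramsey_real (n : ℕ) (h : (ℕ → ℕ) → ℝ)
    (hO : ∀ k k', (∀ i < n, k i = k' i) → h k = h k') (ε : ℝ) (j : ℕ) :
    ∀ (lo : ℝ) (M : Set ℕ), M.Infinite →
    (∀ k, StrictMono k → (∀ i, k i ∈ M) → lo ≤ h k ∧ h k ≤ lo + 2 ^ j * ε) →
    ∃ N ⊆ M, N.Infinite ∧ ∀ k k', StrictMono k → StrictMono k' → (∀ i, k i ∈ N) →
      (∀ i, k' i ∈ N) → |h k - h k'| ≤ ε := by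
  induction j with
  | zero =>
    intro lo M hM hb
    refine ⟨M, subset_rfl, hM, ?_⟩
    intro k k' hk hk' hkM hkM'
    have h1 := hb k hk hkM
    have h2 := hb k' hk' hkM'
    rw [abs_le]
    constructor <;> linarith
  | succ j ih =>
    intro lo M hM hb
    obtain ⟨N, hN, hNi, h1⟩ := ramsey_tuple n (fun k => h k ≤ lo + 2 ^ j * ε)
      (fun k k' hkk hk => by rw [← hO k k' hkk]; exact hk) M hM
    rcases h1 with h1 | h1
    · obtain ⟨N', hN', r⟩ := ih (lo + 2 ^ j * ε) N hNi (by
        intro k hk hkN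
        have h2 := hb k hk (fun i => hN (hkN i))
        have h3 := h1 k hk hkN
        rw [pow_succ] at h2
        constructor <;> linarith)
      exact ⟨N', hN'.trans hN, r⟩
    · obtain ⟨N', hN', r⟩ := ih lo N hNi (by
        intro k hk hkN
        exact ⟨(hb k hk (fun i => hN (hkN i))).1, h1 k hk hkN⟩)
      exact ⟨N', hN'.trans hN, r⟩

end C0SM


namespace C0SM

variable {X : Type} [NormedAddCommGroup X] [NormedSpace ℝ X]

/-- sum of basis vectors over a finite set -/
def sm (x : ℕ → X) (s : Finset ℕ) : X := ∑ i ∈ s, x i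

theorem exists_norming (v : X) : ∃ f : X →L[ℝ] ℝ, ‖f‖ ≤ 1 ∧ f v = ‖v‖ := by
  obtain ⟨f, h1, h2⟩ := exists_dual_vector'' ℝ v
  exact ⟨f, h1, by simpa using h2⟩

theorem le_norm_of_le_one {f : X →L[ℝ] ℝ} (hf : ‖f‖ ≤ 1) (v : X) : |f v| ≤ ‖v‖ := by
  have := f.le_opNorm v
  rw [Real.norm_eq_abs] at this
  nlinarith [norm_nonneg v]

theorem sparse (x : ℕ → X) (hwn : WeaklyNull x) (F : Set (X →L[ℝ] ℝ)) (hF : F.Finite)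
    (M : Set ℕ) (hM : M.Infinite) (δ : ℝ) (hδ : 0 < δ) :
    ∃ L ⊆ M, L.Infinite ∧ ∀ w : Finset ℕ, (w : Set ℕ) ⊆ L → ∀ f ∈ F, ∑ i ∈ w, |f (x i)| ≤ δ := by
  classical
  have h1 : ∀ n : ℕ, ∃ᶠ i in atTop, i ∈ M ∧ ∀ f ∈ F, |f (x i)| ≤ δ / 2 / 2 ^ n := by
    intro n
    have h2 : ∀ᶠ i in atTop, ∀ f ∈ F, |f (x i)| ≤ δ / 2 / 2 ^ n := by
      rw [eventually_all_finite hF]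
      intro f _
      have := (hwn f).abs
      rw [abs_zero] at this
      exact this.eventually_le_const (by positivity)
    exact ((Nat.frequently_atTop_iff_infinite (p := fun i => i ∈ M)).2 hM).and_eventually h2
  obtain ⟨φ, hφ, hφ2⟩ := extraction_forall_of_frequently h1
  refine ⟨Set.range φ, ?_, Set.infinite_range_of_injective hφ.injective, ?_⟩
  · rintro _ ⟨n, rfl⟩; exact (hφ2 n).1
  · intro w hw f hf
    obtain ⟨v, rfl⟩ : ∃ v : Finset ℕ, w = v.image φ := by
      refine ⟨w.preimage φ hφ.injective.injOn, ?_⟩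
      ext a
      simp only [Finset.mem_image, Finset.mem_preimage]
      constructor
      · intro ha
        obtain ⟨n, rfl⟩ := hw ha
        exact ⟨n, ha, rfl⟩
      · rintro ⟨n, hn, rfl⟩; exact hn
    rw [Finset.sum_image hφ.injective.injOn]
    calc ∑ n ∈ v, |f (x (φ n))| ≤ ∑ n ∈ v, δ / 2 / 2 ^ n :=
          Finset.sum_le_sum fun n _ => (hφ2 n).2 f hf
      _ ≤ ∑' n, δ / 2 / 2 ^ n :=
          Summable.sum_le_tsum v (fun n _ => by positivity) (summable_geometric_two' δ)
      _ = δ := tsum_geometric_two' δ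

theorem mono_lemma (x : ℕ → X) (hwn : WeaklyNull x)
    (M : Set ℕ) (hM : M.Infinite) (δ : ℝ) (hδ : 0 < δ) :
    ∃ N ⊆ M, N.Infinite ∧ ∀ u w : Finset ℕ, (u : Set ℕ) ⊆ N → (w : Set ℕ) ⊆ above N u →
      ∀ a : ℕ → ℝ, (∀ i, |a i| ≤ 1) →
      ‖∑ i ∈ u, a i • x i‖ ≤ ‖∑ i ∈ u, a i • x i + ∑ i ∈ w, a i • x i‖ + δ := by
  classical
  obtain ⟨N, h1, h2, h3⟩ := fusion (fun u L => ∀ w : Finset ℕ, (w : Set ℕ) ⊆ L →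
      ∀ a : ℕ → ℝ, (∀ i, |a i| ≤ 1) →
      ‖∑ i ∈ u, a i • x i‖ ≤ ‖∑ i ∈ u, a i • x i + ∑ i ∈ w, a i • x i‖ + δ)
    (fun u L L' h h1 w hw => h1 w (hw.trans h)) (by
    intro u M hM
    let g : (ℕ → ℝ) → X := fun a => ∑ i ∈ u, a i • x i
    have hg : Continuous g := by fun_prop
    have hK : IsCompact (g '' (Set.pi Set.univ fun _ => Set.Icc (-1 : ℝ) 1)) :=
      (isCompact_univ_pi fun _ => isCompact_Icc).image hg
    obtain ⟨t, -, ht, hcov⟩ := hK.finite_cover_balls (show 0 < δ / 4 by positivity)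
    choose f hf1 hf2 using exists_norming (X := X)
    obtain ⟨L, hLM, hLi, hL⟩ := sparse x hwn (f '' t) (ht.image _) M hM (δ / 4) (by positivity)
    refine ⟨L, hLM, hLi, ?_⟩
    intro w hw a ha
    have hmem : g a ∈ g '' (Set.pi Set.univ fun _ => Set.Icc (-1 : ℝ) 1) :=
      ⟨a, fun i _ => abs_le.1 (ha i), rfl⟩
    have := hcov hmem
    simp only [Set.mem_iUnion, Metric.mem_ball, exists_prop] at this
    obtain ⟨v, hv, hd⟩ := this
    rw [dist_eq_norm] at hd
    change ‖g a‖ ≤ ‖g a + ∑ i ∈ w, a i • x i‖ + δ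
    have e1 : |f v (∑ i ∈ w, a i • x i)| ≤ δ / 4 := by
      refine le_trans ?_ (hL w hw (f v) ⟨v, hv, rfl⟩)
      rw [map_sum]
      refine (Finset.abs_sum_le_sum_abs _ _).trans (Finset.sum_le_sum fun i _ => ?_)
      rw [map_smul, smul_eq_mul, abs_mul]
      nlinarith [ha i, abs_nonneg (f v (x i))]
    have e2 := le_norm_of_le_one (hf1 v) (g a - v)
    have e3 := le_norm_of_le_one (hf1 v) (g a + ∑ i ∈ w, a i • x i)
    rw [map_sub, hf2] at e2
    rw [map_add] at e3
    have e4 := norm_sub_norm_le (g a) v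
    have := abs_le.1 e1
    have := abs_le.1 e2
    have := abs_le.1 e3
    linarith) M hM
  exact ⟨N, h1, h2, fun u w hu hw a ha => h3 u hu w hw a ha⟩

theorem ell1_embed [CompleteSpace X] (w : ℕ → X) (C c : ℝ) (hc : 0 < c) (hw : ∀ j, ‖w j‖ ≤ C)
    (h : ∀ (J : Set ℕ) (n : ℕ), ∃ f : X →L[ℝ] ℝ, ‖f‖ ≤ 1 ∧ ∀ j < n,
      (j ∈ J → c ≤ f (w j)) ∧ (j ∉ J → f (w j) ≤ c / 2)) : Embeds ellOne X := by
  have hC : 0 ≤ C := (norm_nonneg _).trans (hw 0)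
  have fin : ∀ (a : ℕ → ℝ) (n : ℕ),
      c / 4 * ∑ j ∈ Finset.range n, |a j| ≤ ‖∑ j ∈ Finset.range n, a j • w j‖ := by
    intro a n
    obtain ⟨f, hf, hf2⟩ := h {j | 0 ≤ a j} n
    obtain ⟨g, hg, hg2⟩ := h {j | 0 ≤ a j}ᶜ n
    have h1 := abs_le.1 (le_norm_of_le_one hf (∑ j ∈ Finset.range n, a j • w j))
    have h2 := abs_le.1 (le_norm_of_le_one hg (∑ j ∈ Finset.range n, a j • w j))
    have h3 : c / 2 * ∑ j ∈ Finset.range n, |a j| ≤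
        f (∑ j ∈ Finset.range n, a j • w j) - g (∑ j ∈ Finset.range n, a j • w j) := by
      rw [map_sum, map_sum, ← Finset.sum_sub_distrib, Finset.mul_sum]
      refine Finset.sum_le_sum fun j hj => ?_
      rw [Finset.mem_range] at hj
      simp only [map_smul, smul_eq_mul]
      by_cases ha : 0 ≤ a j
      · have e1 := (hf2 j hj).1 ha
        have e2 := (hg2 j hj).2 (by simpa using ha)
        rw [abs_of_nonneg ha]
        nlinarith
      · have e1 := (hf2 j hj).2 ha
        have e2 := (hg2 j hj).1 (by simpa using ha)
        rw [abs_of_neg (not_le.1 ha)]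
        nlinarith
    linarith
  have hsum : ∀ z : ellOne, HasSum (fun i => |z i|) ‖z‖ := by
    intro z
    have := lp.hasSum_norm (p := 1) (by simp) z
    simpa using this
  have hsm : ∀ z : ellOne, Summable (fun i => z i • w i) := by
    intro z
    refine Summable.of_norm_bounded ((hsum z).summable.mul_right C) fun i => ?_
    rw [norm_smul, Real.norm_eq_abs]
    exact mul_le_mul_of_nonneg_left (hw i) (abs_nonneg _)
  refine ⟨{ toFun := fun z => ∑' i, z i • w i
            map_add' := ?_
            map_smul' := ?_ }, c / 4, C + 1, by positivity, by positivity, ?_⟩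
  · intro z z'
    rw [← (hsm z).tsum_add (hsm z')]
    simp [add_smul]
  · intro r z
    simp only [RingHom.id_apply]
    rw [← (hsm z).tsum_const_smul]
    simp [mul_smul]
  · intro z
    change c / 4 * ‖z‖ ≤ ‖∑' i, z i • w i‖ ∧ ‖∑' i, z i • w i‖ ≤ (C + 1) * ‖z‖
    constructor
    · refine le_of_tendsto_of_tendsto' ((hsum z).tendsto_sum_nat.const_mul (c / 4))
        (hsm z).hasSum.tendsto_sum_nat.norm fun n => fin _ n
    · have : ‖∑' i, z i • w i‖ ≤ ‖z‖ * C := by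
        refine tsum_of_norm_bounded ((hsum z).mul_right C) fun i => ?_
        rw [norm_smul, Real.norm_eq_abs]
        exact mul_le_mul_of_nonneg_left (hw i) (abs_nonneg _)
      nlinarith [norm_nonneg z]

theorem bad_exists [CompleteSpace X] (hl1 : ¬ Embeds ellOne X) (x : ℕ → X)
    {B : Set (Finset ℕ)} (hB : Thin B) {N : Set ℕ} (hF : Front B N) (C : ℝ)
    (hC : ∀ s ∈ B, ‖sm x s‖ ≤ C) (c : ℝ) (hc : 0 < c) (M : Set ℕ) (hM : M.Infinite) (hMN : M ⊆ N) :
    ∃ L ⊆ M, L.Infinite ∧ ∀ t, BSeq B L t → ∃ n, ¬ ∃ f : X →L[ℝ] ℝ, ‖f‖ ≤ 1 ∧ ∀ i < n,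
      (Even i → c ≤ f (sm x (t i))) ∧ (¬ Even i → f (sm x (t i)) ≤ c / 2) := by
  classical
  obtain ⟨L, hLM, hLi, h⟩ := block_ramsey hB (fun n t => ¬ ∃ f : X →L[ℝ] ℝ, ‖f‖ ≤ 1 ∧ ∀ i < n,
      (Even i → c ≤ f (sm x (t i))) ∧ (¬ Even i → f (sm x (t i)) ≤ c / 2))
    (by
      rintro n t t' h h1 ⟨f, h2, h3⟩
      exact h1 ⟨f, h2, fun i hi => by rw [h i hi]; exact h3 i hi⟩) M hM
  rcases h with h | h
  · exfalso
    obtain ⟨t, ht⟩ := exists_bseq (B := B) (N := L)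
      (fun P hP => hF P (hP.trans (hLM.trans hMN))) hLi
    apply hl1
    refine ell1_embed (fun j => sm x (t (3 * j + 1))) C c hc (fun j => hC _ (ht.2 _).1) ?_
    intro J n
    let idx : ℕ → ℕ := fun i =>
      if i % 2 = 0 then (if i / 2 ∈ J then 3 * (i / 2) + 1 else 3 * (i / 2))
      else (if i / 2 ∈ J then 3 * (i / 2) + 2 else 3 * (i / 2) + 1)
    have hidx : StrictMono idx := by
      apply strictMono_nat_of_lt_succ
      intro i
      rcases Nat.even_or_odd' i with ⟨j, rfl | rfl⟩
      · have e1 : (2 * j + 1) / 2 = j := by omega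
        have e2 : (2 * j) / 2 = j := by omega
        have e3 : (2 * j + 1) % 2 = 1 := by omega
        have e4 : (2 * j) % 2 = 0 := by omega
        by_cases hj1 : j ∈ J <;> by_cases hj2 : j + 1 ∈ J <;>
          simp only [idx, e1, e2, e3, e4, hj1, hj2, if_true, if_false, one_ne_zero] <;> omega
      · have e1 : (2 * j + 1 + 1) / 2 = j + 1 := by omega
        have e2 : (2 * j + 1) / 2 = j := by omega
        have e3 : (2 * j + 1) % 2 = 1 := by omega
        have e4 : (2 * j + 1 + 1) % 2 = 0 := by omega
        by_cases hj1 : j ∈ J <;> by_cases hj2 : j + 1 ∈ J <;>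
          simp only [idx, e1, e2, e3, e4, hj1, hj2, if_true, if_false, one_ne_zero] <;> omega
    have ht' : BSeq B L (fun i => t (idx i)) :=
      ⟨fun i j hij => ht.1 _ _ (hidx hij), fun i => ht.2 _⟩
    have := h _ ht' (2 * n)
    rw [not_not] at this
    obtain ⟨f, hf, hf2⟩ := this
    refine ⟨f, hf, fun j hj => ⟨fun hJ => ?_, fun hJ => ?_⟩⟩
    · have := (hf2 (2 * j) (by omega)).1 (by simp)
      simpa [idx, hJ] using this
    · have := (hf2 (2 * j + 1) (by omega)).2 (by simp)
      have e1 : (2 * j + 1) / 2 = j := by omega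
      have e3 : (2 * j + 1) % 2 = 1 := by omega
      simpa [idx, hJ, e1, e3] using this
  · exact ⟨L, hLM, hLi, h⟩

theorem wn_lemma [CompleteSpace X] (hl1 : ¬ Embeds ellOne X) (x : ℕ → X) (hwn : WeaklyNull x)
    {B : Set (Finset ℕ)} (hB : Thin B) {N : Set ℕ} (hN : N.Infinite) (hF : Front B N) (C : ℝ)
    (hC : ∀ s ∈ B, ‖sm x s‖ ≤ C) :
    ∃ L ⊆ N, L.Infinite ∧ ∀ t, BSeq B L t → WeaklyNull (fun j => sm x (t j)) := by
  classical
  obtain ⟨L, hLN, hLi, hL⟩ := fusion (fun u L => ∀ t, BSeq B (L ∩ N) t → ∃ n,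
      ¬ ∃ f : X →L[ℝ] ℝ, ‖f‖ ≤ 1 ∧ ∀ i < n,
      (Even i → 1 / ((u.card : ℝ) + 1) ≤ f (sm x (t i))) ∧
      (¬ Even i → f (sm x (t i)) ≤ 1 / ((u.card : ℝ) + 1) / 2))
    (fun u L L' h h1 t ht => h1 t ⟨ht.1, fun i => ⟨(ht.2 i).1,
      (ht.2 i).2.trans (Set.inter_subset_inter_left _ h)⟩⟩) (by
      intro u M hM
      by_cases hMN : (M ∩ N).Infinite
      · obtain ⟨L, h1, h2, h3⟩ := bad_exists hl1 x hB hF C hC (1 / ((u.card : ℝ) + 1))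
          (by positivity) (M ∩ N) hMN Set.inter_subset_right
        exact ⟨L, h1.trans Set.inter_subset_left, h2, fun t ht => h3 t ⟨ht.1, fun i =>
          ⟨(ht.2 i).1, (ht.2 i).2.trans Set.inter_subset_left⟩⟩⟩
      · rw [Set.not_infinite] at hMN
        have h := hM.sdiff hMN
        refine ⟨M \ (M ∩ N), Set.sdiff_subset, h, fun t ht => ?_⟩
        exfalso
        obtain ⟨a, ha⟩ := hB.1 _ (ht.2 0).1
        have := (ht.2 0).2 ha
        exact this.1.2 ⟨this.1.1, this.2⟩) N hN
  refine ⟨L, hLN, hLi, ?_⟩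
  intro t ht f
  by_contra hcon
  obtain ⟨g, c0, hc0, hg1, hg2⟩ : ∃ (g : X →L[ℝ] ℝ) (c0 : ℝ), 0 < c0 ∧ ‖g‖ ≤ 1 ∧
      ∃ᶠ j in atTop, c0 ≤ g (sm x (t j)) := by
    rw [Metric.tendsto_atTop] at hcon
    push Not at hcon
    obtain ⟨e, he, hcon⟩ := hcon
    have hfr : ∃ᶠ j in atTop, e ≤ f (sm x (t j)) ∨ e ≤ - f (sm x (t j)) := by
      rw [frequently_atTop]
      intro n
      obtain ⟨m, hm, h⟩ := hcon n
      refine ⟨m, hm, ?_⟩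
      rw [Real.dist_eq, sub_zero] at h
      exact le_abs.1 h
    have hK : 0 < ‖f‖ + 1 := by positivity
    rw [frequently_or_distrib] at hfr
    have hfn : ‖(‖f‖ + 1)⁻¹ • f‖ ≤ 1 := by
      rw [norm_smul, norm_inv, Real.norm_of_nonneg hK.le, inv_mul_le_iff₀ hK]; linarith
    rcases hfr with h | h
    · refine ⟨(‖f‖ + 1)⁻¹ • f, (‖f‖ + 1)⁻¹ * e, by positivity, hfn, h.mono fun j hj => ?_⟩
      simp only [smul_apply, smul_eq_mul]
      gcongr
    · refine ⟨-((‖f‖ + 1)⁻¹ • f), (‖f‖ + 1)⁻¹ * e, by positivity, by rwa [norm_neg],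
        h.mono fun j hj => ?_⟩
      simp only [smul_apply, neg_apply, smul_eq_mul]
      rw [← mul_neg]
      gcongr
  obtain ⟨m, hm⟩ := exists_nat_one_div_lt hc0
  obtain ⟨u, huL, hum⟩ := hLi.exists_subset_card_eq m
  have hi := above_inf hLi u
  set c : ℝ := 1 / ((m : ℝ) + 1) with hcdef
  have hcpos : 0 < c := by positivity
  obtain ⟨P, hPL, hPi, hP⟩ := sparse x hwn {g} (Set.finite_singleton g) (above L u) hi (c / 2)
    (by positivity)
  have habL : above L u ⊆ L := above_sub L u
  obtain ⟨r, hr1, hr2⟩ := seqBuild (fun i s => s ∈ B ∧ (s : Set ℕ) ⊆ above L u ∧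
      (Even i → c ≤ g (sm x s)) ∧ (¬ Even i → g (sm x s) ≤ c / 2)) (by
    intro i b
    by_cases hev : Even i
    · obtain ⟨j, hj, hgj⟩ := (frequently_atTop.1 hg2) (b + u.sup id + 1)
      have hlow : ∀ j, ∀ a ∈ t j, j ≤ a := by
        intro j
        induction j with
        | zero => intro a _; omega
        | succ j ih =>
          intro a ha
          obtain ⟨b, hb⟩ := hB.1 _ (ht.2 j).1
          have := ih b hb
          have := ht.1 j (j + 1) (by omega) b hb a ha
          omega
      refine ⟨t j, ⟨(ht.2 j).1, ?_, fun _ => hm.le.trans hgj, fun h => absurd hev h⟩, ?_⟩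
      · intro a ha
        refine ⟨(ht.2 j).2 ha, fun i hi => ?_⟩
        have := hlow j a ha
        have : i ≤ u.sup id := Finset.le_sup (f := id) hi
        omega
      · intro a ha
        have := hlow j a ha
        omega
    · obtain ⟨s, hs⟩ := front_block hF P (hPL.trans (habL.trans hLN)) hPi b
      refine ⟨s, ⟨hs.1.1, hs.1.2.trans hPL, fun h => absurd h hev, fun _ => ?_⟩, hs.2⟩
      have := hP s hs.1.2 g rfl
      refine le_trans ?_ this
      rw [sm, map_sum]
      exact Finset.sum_le_sum fun i _ => le_abs_self _)
  obtain ⟨n, hn⟩ := hL u huL r ⟨hr1, fun i => ⟨(hr2 i).1, fun a ha =>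
    ⟨(hr2 i).2.1 ha, hLN (habL ((hr2 i).2.1 ha))⟩⟩⟩
  apply hn
  rw [hum]
  exact ⟨g, hg1, fun i _ => (hr2 i).2.2⟩

end C0SM


namespace C0SM

variable {X : Type} [NormedAddCommGroup X] [NormedSpace ℝ X]

theorem bs_step (y : ℕ → X) (hy : ∀ i, ‖y i‖ ≤ 1) (n : ℕ) (ε : ℝ) (hε : 0 < ε)
    (M : Set ℕ) (hM : M.Infinite) : ∃ N ⊆ M, N.Infinite ∧ ∀ a : ℕ → ℝ, (∀ i < n, |a i| ≤ 1) →
      ∀ k k', StrictMono k → StrictMono k' → (∀ i, k i ∈ N) → (∀ i, k' i ∈ N) →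
      |‖∑ i ∈ Finset.range n, a i • y (k i)‖ - ‖∑ i ∈ Finset.range n, a i • y (k' i)‖| ≤ ε := by
  classical
  let h : (Fin n → ℝ) → (ℕ → ℕ) → ℝ := fun v k => ‖∑ i : Fin n, v i • y (k i)‖
  have hlip : ∀ v v' k, |h v k - h v' k| ≤ n * ‖v - v'‖ := by
    intro v v' k
    refine (abs_norm_sub_norm_le _ _).trans ?_
    rw [← Finset.sum_sub_distrib]
    refine (norm_sum_le _ _).trans ?_
    have : ∀ i ∈ (Finset.univ : Finset (Fin n)), ‖v i • y (k i) - v' i • y (k i)‖ ≤ ‖v - v'‖ := by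
      intro i _
      rw [← sub_smul, norm_smul]
      have h1 : ‖v i - v' i‖ ≤ ‖v - v'‖ := norm_le_pi_norm (v - v') i
      nlinarith [hy (k i), norm_nonneg (v i - v' i), norm_nonneg (y (k i))]
    refine (Finset.sum_le_sum this).trans ?_
    simp
  have hδ : 0 < ε / 4 / (n + 1) := by positivity
  have hK : IsCompact (Set.pi Set.univ fun _ : Fin n => Set.Icc (-1 : ℝ) 1) :=
    isCompact_univ_pi fun _ => isCompact_Icc
  obtain ⟨t, htK, ht, hcov⟩ := hK.finite_cover_balls hδ
  have key : ∀ T : Finset (Fin n → ℝ), ∃ N ⊆ M, N.Infinite ∧ ∀ v ∈ T,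
      ∀ k k', StrictMono k → StrictMono k' → (∀ i, k i ∈ N) → (∀ i, k' i ∈ N) →
      |h v k - h v k'| ≤ ε / 2 := by
    intro T
    induction T using Finset.induction_on with
    | empty => exact ⟨M, subset_rfl, hM, by simp⟩
    | insert v T _ ih =>
      obtain ⟨N, hNM, hNi, hN⟩ := ih
      obtain ⟨j, hj⟩ := pow_unbounded_of_one_lt ((n * ‖v‖) / (ε / 2)) (one_lt_two)
      rw [div_lt_iff₀ (by positivity)] at hj
      obtain ⟨N', hN'N, hN'i, hN'⟩ := ramsey_real n (h v)
        (fun k k' hk => by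
          simp only [h]
          congr 1
          exact Finset.sum_congr rfl fun i _ => by rw [hk i i.2]) (ε / 2) j 0 N hNi
        (fun k _ _ => ⟨norm_nonneg _, by
          have := hlip v 0 k
          have h0 : h 0 k = 0 := by simp [h]
          rw [h0, sub_zero, sub_zero] at this
          have := (le_abs_self _).trans this
          linarith⟩)
      refine ⟨N', hN'N.trans hNM, hN'i, ?_⟩
      intro w hw k k' h1 h2 h3 h4
      rcases Finset.mem_insert.1 hw with rfl | hw
      · exact hN' k k' h1 h2 h3 h4
      · exact hN w hw k k' h1 h2 (fun i => hN'N (h3 i)) (fun i => hN'N (h4 i))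
  obtain ⟨N, hNM, hNi, hN⟩ := key ht.toFinset
  refine ⟨N, hNM, hNi, ?_⟩
  intro a ha k k' h1 h2 h3 h4
  have hmem : (fun i : Fin n => a i) ∈ Set.pi Set.univ fun _ : Fin n => Set.Icc (-1 : ℝ) 1 :=
    fun i _ => abs_le.1 (ha i i.2)
  have := hcov hmem
  simp only [Set.mem_iUnion, Metric.mem_ball, exists_prop] at this
  obtain ⟨v, hv, hd⟩ := this
  rw [dist_eq_norm] at hd
  have e0 := hN v (by simpa using hv) k k' h1 h2 h3 h4
  have e1 := hlip (fun i : Fin n => a i) v k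
  have e2 := hlip (fun i : Fin n => a i) v k'
  have e3 : (n : ℝ) * ‖(fun i : Fin n => a i) - v‖ ≤ ε / 4 := by
    rw [lt_div_iff₀ (by positivity)] at hd
    nlinarith [norm_nonneg ((fun i : Fin n => a i) - v)]
  rw [Finset.sum_range, Finset.sum_range]
  change |h (fun i : Fin n => a i) k - h (fun i : Fin n => a i) k'| ≤ ε
  have := abs_le.1 e0
  have := abs_le.1 e1
  have := abs_le.1 e2
  rw [abs_le]
  constructor <;> linarith

theorem bs_seq (y : ℕ → X) (hy : ∀ i, ‖y i‖ ≤ 1) : ∃ ψ : ℕ → ℕ, StrictMono ψ ∧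
    ∀ (n : ℕ) (a : ℕ → ℝ), (∀ i < n, |a i| ≤ 1) →
      ∀ k k' : ℕ → ℕ, StrictMono k → StrictMono k' → n ≤ k 0 → n ≤ k' 0 →
      |‖∑ i ∈ Finset.range n, a i • y (ψ (k i))‖ - ‖∑ i ∈ Finset.range n, a i • y (ψ (k' i))‖|
        ≤ 1 / ((n : ℝ) + 1) := by
  classical
  obtain ⟨N, -, hNi, hN⟩ := fusion (fun u N => ∀ a : ℕ → ℝ, (∀ i < u.card, |a i| ≤ 1) →
      ∀ k k', StrictMono k → StrictMono k' → (∀ i, k i ∈ N) → (∀ i, k' i ∈ N) →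
      |‖∑ i ∈ Finset.range u.card, a i • y (k i)‖ - ‖∑ i ∈ Finset.range u.card, a i • y (k' i)‖|
        ≤ 1 / ((u.card : ℝ) + 1))
    (fun u L L' h h1 a ha k k' hk hk' h2 h3 =>
      h1 a ha k k' hk hk' (fun i => h (h2 i)) (fun i => h (h3 i)))
    (fun u M hM => bs_step y hy u.card _ (by positivity) M hM) Set.univ Set.infinite_univ
  have hs : StrictMono (Nat.nth (· ∈ N)) := Nat.nth_strictMono hNi
  refine ⟨Nat.nth (· ∈ N), hs, ?_⟩
  intro n a ha k k' hk hk' h1 h2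
  have hc : ((Finset.range n).image (Nat.nth (· ∈ N))).card = n := by
    rw [Finset.card_image_of_injective _ hs.injective, Finset.card_range]
  have hab : ∀ k : ℕ → ℕ, StrictMono k → n ≤ k 0 → ∀ i,
      Nat.nth (· ∈ N) (k i) ∈ above N ((Finset.range n).image (Nat.nth (· ∈ N))) := by
    intro k hk h i
    refine ⟨Nat.nth_mem_of_infinite hNi _, ?_⟩
    intro b hb
    obtain ⟨c, hc, rfl⟩ := Finset.mem_image.1 hb
    rw [Finset.mem_range] at hc
    have := hk.monotone (Nat.zero_le i)
    exact hs (by omega)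
  have := hN ((Finset.range n).image (Nat.nth (· ∈ N))) (by
    intro b hb
    obtain ⟨c, hc, rfl⟩ := Finset.mem_image.1 (Finset.mem_coe.1 hb)
    exact Nat.nth_mem_of_infinite hNi _)
  rw [hc] at this
  exact this a ha (fun i => Nat.nth (· ∈ N) (k i)) (fun i => Nat.nth (· ∈ N) (k' i))
    (hs.comp hk) (hs.comp hk') (hab k hk h1) (hab k' hk' h2)

theorem bs_lemma (y : ℕ → X) (hy : ∀ i, ‖y i‖ ≤ 1) : ∃ ψ : ℕ → ℕ, StrictMono ψ ∧
    ∃ (E : Type) (_ : NormedAddCommGroup E) (_ : NormedSpace ℝ E) (_ : CompleteSpace E)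
      (e : ℕ → E), IsSpreadingModel (fun i => y (ψ i)) e := by
  classical
  obtain ⟨ψ, hψ, h⟩ := bs_seq y hy
  refine ⟨ψ, hψ, ?_⟩
  let Lc : ℕ → (ℕ →₀ ℝ) →ₗ[ℝ] X := fun j => Finsupp.linearCombination ℝ (fun i => y (ψ (j + i)))
  have hLc : ∀ (a : ℕ →₀ ℝ) (n : ℕ), a.support ⊆ Finset.range n → ∀ j,
      Lc j a = ∑ i ∈ Finset.range n, a i • y (ψ (j + i)) := by
    intro a n hn j
    simp only [Lc, Finsupp.linearCombination_apply]
    exact Finsupp.sum_of_support_subset _ hn _ (by simp)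
  have hlim1 : ∀ a : ℕ →₀ ℝ, (∀ i, |a i| ≤ 1) → ∃ l, Tendsto (fun j => ‖Lc j a‖) atTop (𝓝 l) := by
    intro a ha
    apply cauchySeq_tendsto_of_complete
    rw [Metric.cauchySeq_iff]
    intro ε hε
    obtain ⟨m, hm⟩ := exists_nat_one_div_lt hε
    obtain ⟨p, hp⟩ := Finset.exists_nat_subset_range a.support
    refine ⟨max m p, fun j hj j' hj' => ?_⟩
    have hs : a.support ⊆ Finset.range (max m p) :=
      hp.trans (Finset.range_subset_range.2 (le_max_right _ _))
    rw [hLc a _ hs, hLc a _ hs, Real.dist_eq]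
    refine (h (max m p) a (fun i _ => ha i) (fun i => j + i) (fun i => j' + i)
      (fun _ _ h => by simpa using h) (fun _ _ h => by simpa using h) hj hj').trans_lt
      (lt_of_le_of_lt ?_ hm)
    have : (m : ℝ) ≤ ((max m p : ℕ) : ℝ) := by exact_mod_cast le_max_left _ _
    gcongr
  have hlim : ∀ a : ℕ →₀ ℝ, ∃ l, Tendsto (fun j => ‖Lc j a‖) atTop (𝓝 l) := by
    intro a
    let K : ℝ := 1 + ∑ i ∈ a.support, |a i|
    have hK : 0 < K := by positivity
    have hKa : ∀ i, |a i| ≤ K := by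
      intro i
      by_cases hi : i ∈ a.support
      · have := Finset.single_le_sum (f := fun i => |a i|) (fun i _ => abs_nonneg _) hi
        simp only [K]
        linarith
      · rw [Finsupp.notMem_support_iff] at hi
        rw [hi, abs_zero]; exact hK.le
    obtain ⟨l, hl⟩ := hlim1 (K⁻¹ • a) (fun i => by
      simp only [Finsupp.smul_apply, smul_eq_mul, abs_mul, abs_inv, abs_of_pos hK]
      rw [inv_mul_le_iff₀ hK]; simpa using hKa i)
    refine ⟨K * l, ?_⟩
    have := hl.const_mul K
    refine this.congr fun j => ?_
    rw [map_smul, norm_smul, norm_inv, Real.norm_of_nonneg hK.le]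
    field_simp
  choose p hp using hlim
  have hp_add : ∀ a b, p (a + b) ≤ p a + p b := by
    intro a b
    refine le_of_tendsto_of_tendsto' (hp (a + b)) ((hp a).add (hp b)) fun j => ?_
    rw [map_add]; exact norm_add_le _ _
  have hp_smul : ∀ (c : ℝ) a, p (c • a) = ‖c‖ * p a := by
    intro c a
    refine tendsto_nhds_unique (hp (c • a)) (((hp a).const_mul ‖c‖).congr fun j => ?_)
    rw [map_smul, norm_smul]
  let S : Seminorm ℝ (ℕ →₀ ℝ) := Seminorm.of p hp_add hp_smul
  letI i1 : SeminormedAddCommGroup (ℕ →₀ ℝ) := S.toAddGroupSeminorm.toSeminormedAddCommGroup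
  have hnorm : ∀ a : ℕ →₀ ℝ, ‖a‖ = p a := fun a => rfl
  letI i2 : NormedSpace ℝ (ℕ →₀ ℝ) := { norm_smul_le := fun c a => (hp_smul c a).le }
  refine ⟨UniformSpace.Completion (ℕ →₀ ℝ), inferInstance, inferInstance, inferInstance,
    fun i => ((Finsupp.single i 1 : ℕ →₀ ℝ) : UniformSpace.Completion (ℕ →₀ ℝ)), ?_⟩
  refine ⟨fun n => 1 / ((n : ℝ) + 1), ?_, tendsto_one_div_add_atTop_nhds_zero_nat, ?_⟩
  · intro m n hmn
    have : (m : ℝ) ≤ n := by exact_mod_cast hmn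
    simp only
    gcongr
  · intro n a ha k hk hnk
    let A : ℕ →₀ ℝ := ∑ i ∈ Finset.range n, a i • Finsupp.single i 1
    have hA : ∑ i ∈ Finset.range n, a i •
        ((Finsupp.single i 1 : ℕ →₀ ℝ) : UniformSpace.Completion (ℕ →₀ ℝ)) =
        (A : UniformSpace.Completion (ℕ →₀ ℝ)) := by
      have := map_sum (UniformSpace.Completion.toComplL (𝕜 := ℝ) (E := ℕ →₀ ℝ))
        (fun i => a i • Finsupp.single i 1) (Finset.range n)
      simp only [map_smul] at this
      exact this.symm
    rw [hA, UniformSpace.Completion.norm_coe, hnorm]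
    have hL : ∀ j, Lc j A = ∑ i ∈ Finset.range n, a i • y (ψ (j + i)) := by
      intro j
      simp [A, Lc, map_sum]
    refine le_of_tendsto ((tendsto_const_nhds.sub (hp A)).abs) ?_
    filter_upwards [eventually_ge_atTop n] with j hj
    rw [hL]
    exact h n a ha k (fun i => j + i) hk (fun _ _ h => by simpa using h) hnk hj

end C0SM


namespace C0SM

variable {X : Type} [NormedAddCommGroup X] [NormedSpace ℝ X]

/-- `v` is a successive sequence of finitely supported vectors -/
def Blk (x v : ℕ → X) : Prop :=
  ∃ s : ℕ → Finset ℕ, Succv s ∧ ∀ j, v j ∈ Submodule.span ℝ (x '' (s j : Set ℕ))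

/-- the spreading model hypothesis -/
def SMH (x : ℕ → X) : Prop :=
  ∀ (E : Type) [NormedAddCommGroup E] [NormedSpace ℝ E] [CompleteSpace E],
      ∀ (y : ℕ → X) (e : ℕ → E), IsBlockBasis x y → (∀ j, ‖y j‖ = 1) → WeaklyNull y →
        IsSpreadingModel y e → ‖e 0 - e 1‖ = 1

theorem Blk.isBlockBasis {x v : ℕ → X} (h : Blk x v) (h0 : ∀ j, v j ≠ 0) : IsBlockBasis x v := by
  classical
  obtain ⟨s, hs, hv⟩ := h
  have hne : ∀ j, (s j).Nonempty := by
    intro j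
    by_contra hc
    rw [Finset.not_nonempty_iff_eq_empty] at hc
    have := hv j
    rw [hc] at this
    simp at this
    exact h0 j this
  simp only [Submodule.mem_span_image_finset_iff_exists_fun'] at hv
  choose c hc using hv
  refine ⟨fun j i => if i ∈ s j then c j i else 0, fun j => (s j).min' (hne j),
    fun j => (s j).max' (hne j), ?_, h0, ?_, ?_⟩
  · intro j
    rw [← hc j]
    symm
    rw [← Finset.sum_subset (s₁ := s j)]
    · exact Finset.sum_congr rfl fun i hi => by simp [hi]
    · intro i hi
      exact Finset.mem_Icc.2 ⟨Finset.min'_le _ _ hi, Finset.le_max' _ _ hi⟩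
    · intro i _ hi
      simp [hi]
  · intro j
    exact Finset.min'_le_max' _ _
  · intro j
    exact hs j (j + 1) (by omega) _ (Finset.max'_mem _ _) _ (Finset.min'_mem _ _)

theorem Blk.sub {x v : ℕ → X} (h : Blk x v) {φ : ℕ → ℕ} (hφ : StrictMono φ) :
    Blk x (fun j => v (φ j)) := by
  obtain ⟨s, hs, hv⟩ := h
  exact ⟨fun j => s (φ j), fun i j hij => hs _ _ (hφ hij), fun j => hv _⟩

theorem Blk.smul {x v : ℕ → X} (h : Blk x v) (c : ℕ → ℝ) : Blk x (fun j => c j • v j) := by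
  obtain ⟨s, hs, hv⟩ := h
  exact ⟨s, hs, fun j => Submodule.smul_mem _ _ (hv j)⟩

theorem Blk.diff {x v : ℕ → X} (h : Blk x v) : Blk x (fun j => v (2 * j) - v (2 * j + 1)) := by
  classical
  obtain ⟨s, hs, hv⟩ := h
  refine ⟨fun j => s (2 * j) ∪ s (2 * j + 1), ?_, ?_⟩
  · intro i j hij a ha b hb
    rcases Finset.mem_union.1 ha with ha | ha <;> rcases Finset.mem_union.1 hb with hb | hb <;>
      exact hs _ _ (by omega) a ha b hb
  · intro j
    refine Submodule.sub_mem _ (Submodule.span_mono (Set.image_mono ?_) (hv (2 * j)))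
      (Submodule.span_mono (Set.image_mono ?_) (hv (2 * j + 1))) <;> simp

theorem wn_sub {v : ℕ → X} (h : WeaklyNull v) {φ : ℕ → ℕ} (hφ : StrictMono φ) :
    WeaklyNull (fun j => v (φ j)) := fun f => (h f).comp hφ.tendsto_atTop

theorem wn_smul {v : ℕ → X} (h : WeaklyNull v) (c : ℕ → ℝ) (K : ℝ) (hc : ∀ j, |c j| ≤ K) :
    WeaklyNull (fun j => c j • v j) := by
  intro f
  have h1 := ((h f).abs.const_mul K)
  rw [abs_zero, mul_zero] at h1
  refine squeeze_zero_norm (fun j => ?_) h1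
  rw [map_smul, smul_eq_mul, Real.norm_eq_abs, abs_mul]
  exact mul_le_mul_of_nonneg_right (hc j) (abs_nonneg _)

theorem wn_diff {v : ℕ → X} (h : WeaklyNull v) :
    WeaklyNull (fun j => v (2 * j) - v (2 * j + 1)) := by
  intro f
  have h1 := (h f).comp (show StrictMono (fun j : ℕ => 2 * j) from
    fun a b hab => by simp only; omega).tendsto_atTop
  have h2 := (h f).comp (show StrictMono (fun j : ℕ => 2 * j + 1) from
    fun a b hab => by simp only; omega).tendsto_atTop
  have := h1.sub h2
  simpa using this

theorem spread4 {E : Type} [NormedAddCommGroup E] [NormedSpace ℝ E] {Y : ℕ → X} {e : ℕ → E}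
    (h : IsSpreadingModel Y e) (α : ℕ → ℝ) (hα : ∀ i, |α i| ≤ 1) (h4 : ∀ i, 4 ≤ i → α i = 0)
    (η : ℝ) (hη : 0 < η) : ∃ n0, ∀ a b c d, n0 ≤ a → a < b → b < c → c < d →
      |‖α 0 • Y a + α 1 • Y b + α 2 • Y c + α 3 • Y d‖ -
        ‖α 0 • e 0 + α 1 • e 1 + α 2 • e 2 + α 3 • e 3‖| ≤ η := by
  obtain ⟨ε, -, hε, h⟩ := h
  obtain ⟨n, hn4, hn⟩ := ((eventually_ge_atTop 4).and (hε.eventually_le_const hη)).exists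
  refine ⟨n, fun a b c d hna hab hbc hcd => ?_⟩
  let k' : ℕ → ℕ := fun i => if i = 0 then a else if i = 1 then b else if i = 2 then c
    else d + (i - 3)
  have hk' : StrictMono k' := by
    apply strictMono_nat_of_lt_succ
    intro i
    rcases i with _ | _ | _ | i <;> simp [k'] <;> omega
  have := h n α (fun i _ => hα i) k' hk' (by simpa [k'] using hna)
  have e1 : ∀ {Z : Type} [NormedAddCommGroup Z] [NormedSpace ℝ Z] (z : ℕ → Z),
      ∑ i ∈ Finset.range n, α i • z i = α 0 • z 0 + α 1 • z 1 + α 2 • z 2 + α 3 • z 3 := by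
    intro Z _ _ z
    rw [← Finset.sum_subset (Finset.range_subset_range.2 hn4)]
    · simp [Finset.sum_range_succ]
    · intro i _ hi
      rw [h4 i (by simpa using hi), zero_smul]
  rw [e1 (fun i => Y (k' i)), e1 e] at this
  exact (by simpa [k'] using this : _ ≤ ε n).trans hn

theorem spread_diff2 {E : Type} [NormedAddCommGroup E] [NormedSpace ℝ E] {Y : ℕ → X} {e : ℕ → E}
    (h : IsSpreadingModel Y e) (η : ℝ) (hη : 0 < η) : ∃ n0, ∀ a b, n0 ≤ a → a < b →
      |‖Y a - Y b‖ - ‖e 0 - e 1‖| ≤ η := by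
  obtain ⟨n0, h1⟩ := spread4 h (fun i => if i = 0 then 1 else if i = 1 then -1 else 0)
    (fun i => by split_ifs <;> simp) (fun i hi => by
      split_ifs <;> first | omega | rfl) η hη
  refine ⟨n0, fun a b ha hab => ?_⟩
  have := h1 a b (b + 1) (b + 2) ha hab (by omega) (by omega)
  simpa [sub_eq_add_neg] using this

theorem spread_diff4 {E : Type} [NormedAddCommGroup E] [NormedSpace ℝ E] {Y : ℕ → X} {e : ℕ → E}
    (h : IsSpreadingModel Y e) (η : ℝ) (hη : 0 < η) : ∃ n0, ∀ a b c d, n0 ≤ a → a < b → b < c →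
      c < d → |‖Y a - Y b - Y c + Y d‖ - ‖e 0 - e 1 - e 2 + e 3‖| ≤ η := by
  obtain ⟨n0, h1⟩ := spread4 h (fun i => if i = 0 then 1 else if i = 1 then -1 else
      if i = 2 then -1 else if i = 3 then 1 else 0)
    (fun i => by split_ifs <;> simp) (fun i hi => by
      split_ifs <;> first | omega | rfl) η hη
  refine ⟨n0, fun a b c d ha hab hbc hcd => ?_⟩
  have := h1 a b c d ha hab hbc hcd
  simpa [sub_eq_add_neg] using this

theorem four_lemma {x v : ℕ → X} (hsm : SMH x) (hv : Blk x v) (hv1 : ∀ j, ‖v j‖ = 1)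
    (hwn : WeaklyNull v) : ∃ ψ : ℕ → ℕ, StrictMono ψ ∧ ∀ η > 0, ∃ n0, ∀ a b c d, n0 ≤ a → a < b →
      b < c → c < d → ‖v (ψ a) - v (ψ b) - v (ψ c) + v (ψ d)‖ ≤ 1 + η := by
  have hne : ∀ {w : ℕ → X}, (∀ j, ‖w j‖ = 1) → ∀ j, w j ≠ 0 := by
    intro w hw j h
    have := hw j
    rw [h, norm_zero] at this
    norm_num at this
  obtain ⟨ψ, hψ, E, _, _, _, e, he⟩ := bs_lemma v (fun i => (hv1 i).le)
  refine ⟨ψ, hψ, ?_⟩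
  have h01 := hsm E (fun j => v (ψ j)) e ((hv.sub hψ).isBlockBasis (hne fun j => hv1 _))
    (fun j => hv1 _) (wn_sub hwn hψ) he
  have hr : ‖e 0 - e 1 - e 2 + e 3‖ ≤ 1 := by
    apply le_of_forall_pos_le_add
    intro κ hκ
    obtain ⟨η, hη, hη2, hηκ⟩ : ∃ η : ℝ, 0 < η ∧ η ≤ 1 / 2 ∧ 4 * η ≤ κ :=
      ⟨min (1 / 2) (κ / 4), by positivity, min_le_left _ _, by
        have := min_le_right (1 / 2) (κ / 4); linarith⟩
    obtain ⟨n1, h1⟩ := spread_diff2 he η hη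
    obtain ⟨n2, h2⟩ := spread_diff4 he η hη
    let n0 := n1 + n2
    have hsh : StrictMono (fun j : ℕ => ψ (2 * n0 + j)) :=
      hψ.comp (fun a b hab => by omega)
    let d : ℕ → X := fun j => v (ψ (2 * n0 + 2 * j)) - v (ψ (2 * n0 + (2 * j + 1)))
    have hdB : Blk x d := (hv.sub hsh).diff
    have hdw : WeaklyNull d := wn_diff (wn_sub hwn hsh)
    have hdn : ∀ j, |‖d j‖ - 1| ≤ η := by
      intro j
      have := h1 (2 * n0 + 2 * j) (2 * n0 + (2 * j + 1)) (by omega) (by omega)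
      rwa [h01] at this
    have hdpos : ∀ j, 1 / 2 ≤ ‖d j‖ := by
      intro j
      have := abs_le.1 (hdn j)
      linarith
    have hd'1 : ∀ j, ‖‖d j‖⁻¹ • d j‖ = 1 := by
      intro j
      have := hdpos j
      rw [norm_smul, norm_inv, norm_norm]
      exact inv_mul_cancel₀ (by linarith)
    obtain ⟨χ, hχ, E', _, _, _, e', he'⟩ := bs_lemma (fun j => ‖d j‖⁻¹ • d j)
      (fun i => (hd'1 i).le)
    have h01' := hsm E' (fun j => ‖d (χ j)‖⁻¹ • d (χ j)) e'
      (((hdB.smul fun j => ‖d j‖⁻¹).sub hχ).isBlockBasis (hne fun j => hd'1 (χ j)))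
      (fun j => hd'1 _) (wn_sub (wn_smul hdw (fun j => ‖d j‖⁻¹) 2 (fun j => by
        rw [abs_inv, abs_norm]
        have := hdpos j
        rw [inv_le_comm₀ (by linarith) (by norm_num)]
        linarith)) hχ) he'
    obtain ⟨n3, h3⟩ := spread_diff2 he' η hη
    have h4 := h3 n3 (n3 + 1) le_rfl (by omega)
    rw [h01'] at h4
    have hχ' : χ n3 < χ (n3 + 1) := hχ (by omega)
    have h5 := h2 (2 * n0 + 2 * χ n3) (2 * n0 + (2 * χ n3 + 1)) (2 * n0 + 2 * χ (n3 + 1))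
      (2 * n0 + (2 * χ (n3 + 1) + 1)) (by omega) (by omega) (by omega) (by omega)
    have h6 : ∀ j, ‖d j - ‖d j‖⁻¹ • d j‖ ≤ η := by
      intro j
      have hp := hdpos j
      have e1 : d j - ‖d j‖⁻¹ • d j = (‖d j‖ - 1) • (‖d j‖⁻¹ • d j) := by
        rw [sub_smul, smul_smul, mul_inv_cancel₀ (by linarith), one_smul, one_smul]
      rw [e1, norm_smul, hd'1, mul_one]
      exact hdn j
    have h7 : ‖v (ψ (2 * n0 + 2 * χ n3)) - v (ψ (2 * n0 + (2 * χ n3 + 1))) -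
        v (ψ (2 * n0 + 2 * χ (n3 + 1))) + v (ψ (2 * n0 + (2 * χ (n3 + 1) + 1)))‖ ≤ 1 + 3 * η := by
      have e1 : v (ψ (2 * n0 + 2 * χ n3)) - v (ψ (2 * n0 + (2 * χ n3 + 1))) -
        v (ψ (2 * n0 + 2 * χ (n3 + 1))) + v (ψ (2 * n0 + (2 * χ (n3 + 1) + 1))) =
        (‖d (χ n3)‖⁻¹ • d (χ n3) - ‖d (χ (n3 + 1))‖⁻¹ • d (χ (n3 + 1))) +
        ((d (χ n3) - ‖d (χ n3)‖⁻¹ • d (χ n3)) -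
        (d (χ (n3 + 1)) - ‖d (χ (n3 + 1))‖⁻¹ • d (χ (n3 + 1)))) := by
        simp only [d]; abel
      rw [e1]
      refine (norm_add_le _ _).trans ?_
      have := norm_sub_le (d (χ n3) - ‖d (χ n3)‖⁻¹ • d (χ n3))
        (d (χ (n3 + 1)) - ‖d (χ (n3 + 1))‖⁻¹ • d (χ (n3 + 1)))
      have := h6 (χ n3)
      have := h6 (χ (n3 + 1))
      have := (abs_le.1 h4).2
      linarith
    have := (abs_le.1 h5).1
    linarith
  intro η hη
  obtain ⟨n0, h⟩ := spread_diff4 he η hη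
  refine ⟨n0, fun a b c d h1 h2 h3 h4 => ?_⟩
  have := (abs_le.1 (h a b c d h1 h2 h3 h4)).2
  linarith

theorem mazur {Y : ℕ → X} (h : WeaklyNull Y) (m : ℕ) (η : ℝ) (hη : 0 < η) :
    ∃ K, ∃ z ∈ convexHull ℝ (Y '' Set.Ico m K), ‖z‖ ≤ η := by
  classical
  have h0 : (0 : X) ∈ closure (convexHull ℝ (Y '' Set.Ici m)) := by
    by_contra hc
    obtain ⟨f, u, h1, h2⟩ := geometric_hahn_banach_point_closed
      (convex_convexHull ℝ (Y '' Set.Ici m)).closure isClosed_closure hc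
    rw [map_zero] at h1
    obtain ⟨n, hn1, hn2⟩ := ((eventually_ge_atTop m).and ((h f).eventually_lt_const h1)).exists
    have := h2 (Y n) (subset_closure (subset_convexHull ℝ _ ⟨n, hn1, rfl⟩))
    linarith
  obtain ⟨z, hz, hd⟩ := Metric.mem_closure_iff.1 h0 η hη
  rw [dist_zero_left] at hd
  rw [convexHull_eq_union_convexHull_finite_subsets] at hz
  simp only [Set.mem_iUnion, exists_prop] at hz
  obtain ⟨t, ht, hzt⟩ := hz
  obtain ⟨r, hr, hr2⟩ := Finset.subset_set_image_iff.1 ht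
  refine ⟨r.sup id + 1, z, ?_, hd.le⟩
  refine convexHull_mono ?_ hzt
  rw [← hr2]
  intro w hw
  obtain ⟨i, hi, rfl⟩ := Finset.mem_image.1 (Finset.mem_coe.1 hw)
  refine ⟨i, ⟨hr hi, ?_⟩, rfl⟩
  have : i ≤ r.sup id := Finset.le_sup (f := id) hi
  omega

theorem pair_norm {x v : ℕ → X} (hsm : SMH x) (hv : Blk x v) (hv1 : ∀ j, ‖v j‖ = 1)
    (hwn : WeaklyNull v) (η : ℝ) (hη : 0 < η) : ∃ j k, j < k ∧ ‖v j + v k‖ ≤ 1 + η := by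
  obtain ⟨ψ, hψ, h⟩ := four_lemma hsm hv hv1 hwn
  have hw := wn_sub hwn hψ
  obtain ⟨n0, h0⟩ := h (η / 3) (by positivity)
  obtain ⟨K1, z1, hz1, hz1n⟩ := mazur hw (n0 + 1) (η / 3) (by positivity)
  obtain ⟨K2, z2, hz2, hz2n⟩ := mazur hw (n0 + 1 + K1) (η / 3) (by positivity)
  let d := n0 + 1 + K1 + K2
  refine ⟨ψ n0, ψ d, hψ (by omega), ?_⟩
  have s1 : ∀ c ∈ Set.Ico (n0 + 1 + K1) K2,
      z1 ∈ Metric.closedBall (v (ψ n0) - v (ψ c) + v (ψ d)) (1 + η / 3) := by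
    intro c hc
    refine convexHull_min ?_ (convex_closedBall _ _) hz1
    rintro _ ⟨b, hb, rfl⟩
    rw [Metric.mem_closedBall, dist_comm, dist_eq_norm]
    have := h0 n0 b c d le_rfl (by have := hb.1; omega) (by have := hb.2; have := hc.1; omega)
      (by have := hc.2; omega)
    refine le_trans (le_of_eq ?_) this
    congr 1; abel
  have s2 : z2 ∈ Metric.closedBall (v (ψ n0) - z1 + v (ψ d)) (1 + η / 3) := by
    refine convexHull_min ?_ (convex_closedBall _ _) hz2
    rintro _ ⟨c, hc, rfl⟩
    have := s1 c hc
    rw [Metric.mem_closedBall, dist_comm, dist_eq_norm] at this ⊢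
    refine le_trans (le_of_eq ?_) this
    congr 1; abel
  rw [Metric.mem_closedBall, dist_comm, dist_eq_norm] at s2
  have e1 : v (ψ n0) + v (ψ d) = (v (ψ n0) - z1 + v (ψ d) - z2) + (z1 + z2) := by abel
  rw [e1]
  refine (norm_add_le _ _).trans ?_
  have := norm_add_le z1 z2
  linarith

theorem pair_lemma {x z : ℕ → X} (hsm : SMH x) (hz : Blk x z) (R : ℝ)
    (hz1 : ∀ j, 1 / 2 ≤ ‖z j‖) (hz2 : ∀ j, ‖z j‖ ≤ R)
    (hwn : WeaklyNull z) (η : ℝ) (hη : 0 < η) : ∃ j k, j < k ∧ ‖z j + z k‖ ≤ R + η := by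
  obtain ⟨r, hr, φ, hφ, hlim⟩ := (isCompact_Icc (a := (1 / 2 : ℝ)) (b := R)).tendsto_subseq
    (x := fun j => ‖z j‖) (fun j => ⟨hz1 j, hz2 j⟩)
  have hR : 1 / 2 ≤ R := (hz1 0).trans (hz2 0)
  let κ := η / (R + 2)
  have hκ : 0 < κ := by positivity
  obtain ⟨n0, hn0⟩ := (Metric.tendsto_atTop.1 hlim) κ hκ
  have hφ' : StrictMono (fun j => φ (n0 + j)) := hφ.comp (fun a b hab => by omega)
  have hB : Blk x (fun j => ‖z (φ (n0 + j))‖⁻¹ • z (φ (n0 + j))) :=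
    (hz.smul fun j => ‖z j‖⁻¹).sub hφ'
  have h1 : ∀ j, ‖‖z j‖⁻¹ • z j‖ = 1 := by
    intro j
    have := hz1 j
    rw [norm_smul, norm_inv, norm_norm]
    exact inv_mul_cancel₀ (by linarith)
  obtain ⟨j, k, hjk, h⟩ := pair_norm hsm hB (fun j => h1 _)
    (wn_sub (wn_smul hwn (fun j => ‖z j‖⁻¹) 2 (fun j => by
        rw [abs_inv, abs_norm]
        have := hz1 j
        rw [inv_le_comm₀ (by linarith) (by norm_num)]
        linarith)) hφ') κ hκ
  refine ⟨φ (n0 + j), φ (n0 + k), hφ' hjk, ?_⟩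
  have h6 : ∀ j, ‖z (φ (n0 + j)) - r • (‖z (φ (n0 + j))‖⁻¹ • z (φ (n0 + j)))‖ ≤ κ := by
    intro j
    have hp := hz1 (φ (n0 + j))
    have e1 : z (φ (n0 + j)) - r • (‖z (φ (n0 + j))‖⁻¹ • z (φ (n0 + j))) =
        (‖z (φ (n0 + j))‖ - r) • (‖z (φ (n0 + j))‖⁻¹ • z (φ (n0 + j))) := by
      rw [sub_smul, smul_smul ‖z (φ (n0 + j))‖, mul_inv_cancel₀ (by linarith), one_smul]
    rw [e1, norm_smul, h1, mul_one]
    have := hn0 (n0 + j) (by omega)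
    rw [Real.dist_eq] at this
    exact this.le
  have e1 : z (φ (n0 + j)) + z (φ (n0 + k)) =
      r • (‖z (φ (n0 + j))‖⁻¹ • z (φ (n0 + j)) + ‖z (φ (n0 + k))‖⁻¹ • z (φ (n0 + k))) +
      ((z (φ (n0 + j)) - r • (‖z (φ (n0 + j))‖⁻¹ • z (φ (n0 + j)))) +
      (z (φ (n0 + k)) - r • (‖z (φ (n0 + k))‖⁻¹ • z (φ (n0 + k))))) := by
    rw [smul_add]; abel
  rw [e1]
  refine (norm_add_le _ _).trans ?_
  have hr0 : 0 ≤ r := by linarith [hr.1]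
  rw [norm_smul, Real.norm_of_nonneg hr0]
  have a1 := norm_add_le (z (φ (n0 + j)) - r • (‖z (φ (n0 + j))‖⁻¹ • z (φ (n0 + j))))
      (z (φ (n0 + k)) - r • (‖z (φ (n0 + k))‖⁻¹ • z (φ (n0 + k))))
  have a2 := h6 j
  have a3 := h6 k
  have a4 := mul_le_mul_of_nonneg_left h hr0
  have a5 : (R + 2) * κ = η := by simp only [κ]; field_simp
  nlinarith [hr.2]

end C0SM


namespace C0SM

variable {X : Type} [NormedAddCommGroup X] [NormedSpace ℝ X]

/-- all initial segments have sums of norm at most `1 + ε` -/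
def TT (x : ℕ → X) (ε : ℝ) (s : Finset ℕ) : Prop := ∀ b, ‖sm x (s.filter (· < b))‖ ≤ 1 + ε

theorem TT.norm_le {x : ℕ → X} {ε : ℝ} {s : Finset ℕ} (h : TT x ε s) : ‖sm x s‖ ≤ 1 + ε := by
  have := h (s.sup id + 1)
  rwa [Finset.filter_true_of_mem] at this
  intro i hi
  have : i ≤ s.sup id := Finset.le_sup (f := id) hi
  omega

theorem insert_min (w : Finset ℕ) (k a : ℕ) (ha : a ∈ w) (hk : k ≤ a) :
    ∃ a0 ∈ w, k ≤ a0 ∧ insert a0 (w.filter (· < k)) = w.filter (· < a0 + 1) := by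
  have hne : (w.filter (k ≤ ·)).Nonempty := ⟨a, by simp [ha, hk]⟩
  have hm := Finset.min'_mem _ hne
  have hl := Finset.min'_le (w.filter (k ≤ ·))
  set a0 := (w.filter (k ≤ ·)).min' hne
  rw [Finset.mem_filter] at hm
  refine ⟨a0, hm.1, hm.2, ?_⟩
  ext i
  simp only [Finset.mem_insert, Finset.mem_filter]
  constructor
  · rintro (rfl | ⟨h1, h2⟩)
    · exact ⟨hm.1, by omega⟩
    · exact ⟨h1, by omega⟩
  · rintro ⟨h1, h2⟩
    by_cases h : k ≤ i
    · left
      have := hl i (by simp [h1, h])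
      omega
    · right; exact ⟨h1, by omega⟩

theorem stab_exists (x : ℕ → X) (ε : ℝ) (M : Set ℕ) (hM : M.Infinite) :
    ∃ N ⊆ M, N.Infinite ∧ ∀ u : Finset ℕ, (u : Set ℕ) ⊆ N →
      (∀ a ∈ above N u, ‖sm x (insert a u)‖ ≤ 1 + ε) ∨
      (∀ a ∈ above N u, 1 + ε < ‖sm x (insert a u)‖) := by
  classical
  refine fusion (fun u L => (∀ a ∈ L, ‖sm x (insert a u)‖ ≤ 1 + ε) ∨
      (∀ a ∈ L, 1 + ε < ‖sm x (insert a u)‖)) ?_ ?_ M hM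
  · intro u L L' h h1
    exact h1.imp (fun h1 a ha => h1 a (h ha)) (fun h1 a ha => h1 a (h ha))
  · intro u M hM
    by_cases h : {a ∈ M | ‖sm x (insert a u)‖ ≤ 1 + ε}.Infinite
    · exact ⟨_, fun a ha => ha.1, h, Or.inl fun a ha => ha.2⟩
    · rw [Set.not_infinite] at h
      refine ⟨_, Set.sdiff_subset, hM.sdiff h, Or.inr fun a ha => ?_⟩
      by_contra hc
      exact ha.2 ⟨ha.1, not_lt.1 hc⟩

/-- the maximal sets -/
def BB (x : ℕ → X) (ε : ℝ) (N : Set ℕ) : Set (Finset ℕ) :=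
  {u | u.Nonempty ∧ (u : Set ℕ) ⊆ N ∧ TT x ε u ∧ ∀ a ∈ above N u, 1 + ε < ‖sm x (insert a u)‖}

theorem BB_max {x : ℕ → X} {ε : ℝ} {N : Set ℕ} {w : Finset ℕ} (hw : (w : Set ℕ) ⊆ N)
    (hT : TT x ε w) (k : ℕ) (hB : w.filter (· < k) ∈ BB x ε N) : ∀ a ∈ w, a < k := by
  intro a ha
  by_contra hk
  obtain ⟨a0, h1, h2, h3⟩ := insert_min w k a ha (not_lt.1 hk)
  have := hB.2.2.2 a0 ⟨hw h1, fun i hi => by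
    have := (Finset.mem_filter.1 hi).2; omega⟩
  rw [h3] at this
  exact absurd (hT (a0 + 1)) (not_le.2 this)

theorem BB_thin (x : ℕ → X) (ε : ℝ) (N : Set ℕ) : Thin (BB x ε N) := by
  refine ⟨fun s hs => hs.1, ?_⟩
  intro s hs t ht b hb
  rw [hb] at hs
  rw [hb, Finset.filter_true_of_mem (BB_max ht.2.1 ht.2.2.1 b hs)]

theorem BB_front {x : ℕ → X} (hx : ∀ i, ‖x i‖ = 1) {ε : ℝ} (hε : 0 < ε) (hε1 : ε ≤ 1) {N : Set ℕ}
    (hN : ∀ u : Finset ℕ, (u : Set ℕ) ⊆ N →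
      (∀ a ∈ above N u, ‖sm x (insert a u)‖ ≤ 1 + ε) ∨
      (∀ a ∈ above N u, 1 + ε < ‖sm x (insert a u)‖))
    (h2 : ∀ P ⊆ N, P.Infinite → ∃ k, 2 < ‖sm x (ini P k)‖) : Front (BB x ε N) N := by
  classical
  intro P hP hPi
  have hex : ∃ k, 1 + ε < ‖sm x (ini P k)‖ := by
    obtain ⟨k, hk⟩ := h2 P hP hPi
    exact ⟨k, by linarith⟩
  have hspec := Nat.find_spec hex
  have hmin := fun m (h : m < Nat.find hex) => not_lt.1 (Nat.find_min hex h)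
  have e0 : ini P 0 = ∅ := by ext i; simp [mem_ini]
  set k := Nat.find hex
  obtain ⟨m, hm⟩ : ∃ m, k = m + 1 := by
    refine Nat.exists_eq_succ_of_ne_zero fun h => ?_
    rw [h, e0] at hspec
    simp [sm] at hspec
    linarith
  have hmP : m ∈ P := by
    by_contra hc
    have : ini P k = ini P m := by
      ext i
      simp only [mem_ini]
      constructor
      · rintro ⟨h1, h2⟩
        refine ⟨?_, h2⟩
        rcases Nat.lt_or_ge i m with h | h
        · exact h
        · exact absurd h2 (by rw [show i = m by omega]; exact hc)
      · rintro ⟨h1, h2⟩; exact ⟨by omega, h2⟩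
    rw [this] at hspec
    exact absurd (hmin m (by omega)) (not_le.2 hspec)
  have hins : ini P k = insert m (ini P m) := by
    ext i
    simp only [mem_ini, Finset.mem_insert]
    constructor
    · rintro ⟨h1, h2⟩
      by_cases h : i = m
      · exact Or.inl h
      · exact Or.inr ⟨by omega, h2⟩
    · rintro (rfl | ⟨h1, h2⟩)
      · exact ⟨by omega, hmP⟩
      · exact ⟨by omega, h2⟩
  have hsub : (ini P m : Set ℕ) ⊆ N := fun i hi => hP (mem_ini.1 (Finset.mem_coe.1 hi)).2
  refine ⟨m, ?_, hsub, ?_, ?_⟩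
  · by_contra hc
    rw [Finset.not_nonempty_iff_eq_empty] at hc
    rw [hins, hc] at hspec
    simp [sm, hx] at hspec
    linarith
  · intro b
    have : (ini P m).filter (· < b) = ini P (min m b) := by
      ext i
      simp only [mem_ini, Finset.mem_filter, lt_min_iff]
      tauto
    rw [this]
    exact hmin _ (by have := min_le_left m b; omega)
  · rcases hN _ hsub with h | h
    · exfalso
      have := h m ⟨hP hmP, fun i hi => (mem_ini.1 hi).1⟩
      rw [← hins] at this
      linarith
    · exact h

theorem sm_blk {x : ℕ → X} {t : ℕ → Finset ℕ} (ht : Succv t) : Blk x (fun j => sm x (t j)) :=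
  ⟨t, ht, fun _ => Submodule.sum_mem _ fun i hi => Submodule.subset_span ⟨i, hi, rfl⟩⟩

theorem sm_union {x : ℕ → X} {s t : Finset ℕ} (h : ∀ a ∈ s, ∀ b ∈ t, a < b) :
    sm x (s ∪ t) = sm x s + sm x t := by
  classical
  refine Finset.sum_union (Finset.disjoint_left.2 fun a h1 h2 => ?_)
  exact lt_irrefl _ (h a h1 a h2)

theorem stack [CompleteSpace X] {x : ℕ → X} (hx : ∀ i, ‖x i‖ = 1) (hwn : WeaklyNull x)
    (hl1 : ¬ Embeds ellOne X) (hsm : SMH x) (ε ε' : ℝ) (hε : 0 < ε) (hεε' : ε < ε') (hε1 : ε' ≤ 1)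
    (M : Set ℕ) (hM : M.Infinite) (h2 : ∀ P ⊆ M, P.Infinite → ∃ k, 2 < ‖sm x (ini P k)‖) :
    ∃ N ⊆ M, N.Infinite ∧ ∀ P ⊆ N, P.Infinite → ∃ k, (ini P k).Nonempty ∧ TT x ε' (ini P k) ∧
      ∀ w : Finset ℕ, (w : Set ℕ) ⊆ above N (ini P k) → TT x ε w → TT x ε' (ini P k ∪ w) := by
  classical
  set δ := (ε' - ε) / 2 with hδd
  have hδ : 0 < δ := by simp only [hδd]; linarith
  obtain ⟨N1, hN1M, hN1i, hN1⟩ := mono_lemma x hwn M hM δ hδ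
  have mono : ∀ u w : Finset ℕ, (u : Set ℕ) ⊆ N1 → (w : Set ℕ) ⊆ above N1 u →
      ‖sm x u‖ ≤ ‖sm x u + sm x w‖ + δ := by
    intro u w hu hw
    simpa [sm] using hN1 u w hu hw (fun _ => 1) (by simp)
  obtain ⟨N2, hN2N, hN2i, hN2⟩ := stab_exists x ε N1 hN1i
  have hF := BB_front hx hε (by linarith) hN2 (fun P hP => h2 P (hP.trans (hN2N.trans hN1M)))
  have hB := BB_thin x ε N2
  obtain ⟨L, hLN, hLi, hL⟩ := wn_lemma hl1 x hwn hB hN2i hF (1 + ε) (fun s hs => hs.2.2.1.norm_le)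
  obtain ⟨N, hNL, hNi, hN⟩ := block_ramsey hB
    (fun n t => n = 2 ∧ 1 + ε + δ < ‖sm x (t 0) + sm x (t 1)‖)
    (by
      rintro n t t' h ⟨rfl, h1⟩
      rw [h 0 (by omega), h 1 (by omega)] at h1
      exact ⟨rfl, h1⟩) L hLi
  have hNN2 := hNL.trans hLN
  have hNN1 := hNN2.trans hN2N
  have hFN : Front (BB x ε N2) N := fun P hP => hF P (hP.trans hNN2)
  have hpair : ∀ s ∈ BB x ε N2, ∀ t ∈ BB x ε N2, (s : Set ℕ) ⊆ N → (t : Set ℕ) ⊆ N →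
      (∀ a ∈ s, ∀ b ∈ t, a < b) → ‖sm x s + sm x t‖ ≤ 1 + ε + δ := by
    rcases hN with hN | hN
    · intro s hs t ht hsN htN hst
      obtain ⟨r, hr1, hr2⟩ := seqBuild (fun _ q => (q ∈ BB x ε N2 ∧ (q : Set ℕ) ⊆ N) ∧
          ∀ a ∈ q, t.sup id < a) (by
        intro _ b
        obtain ⟨q, h1, h2⟩ := front_block hFN N subset_rfl hNi (b + t.sup id)
        exact ⟨q, ⟨h1, fun a ha => by have := h2 a ha; omega⟩, fun a ha => by
          have := h2 a ha; omega⟩)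
      have htr : ∀ i, ∀ a ∈ t, ∀ b ∈ r i, a < b := by
        intro i a ha b hb
        have h1 : a ≤ t.sup id := Finset.le_sup (f := id) ha
        have := (hr2 i).2 b hb
        omega
      have hsr : ∀ i, ∀ a ∈ s, ∀ b ∈ r i, a < b := by
        intro i a ha b hb
        obtain ⟨c, hc⟩ := ht.1
        exact (hst a ha c hc).trans (htr i c hc b hb)
      have hb : BSeq (BB x ε N2) N (fun i => if i = 0 then s else if i = 1 then t else r i) := by
        constructor
        · intro i j hij a ha b hb
          rcases i with _ | _ | i <;> rcases j with _ | _ | j <;> try omega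
          · exact hst a (by simpa using ha) b (by simpa using hb)
          · exact hsr (j + 2) a (by simpa using ha) b (by simpa using hb)
          · exact htr (j + 2) a (by simpa using ha) b (by simpa using hb)
          · exact hr1 (i + 2) (j + 2) hij a (by simpa using ha) b (by simpa using hb)
        · intro i
          rcases i with _ | _ | i
          · simpa using ⟨hs, hsN⟩
          · simpa using ⟨ht, htN⟩
          · simpa using (hr2 (i + 2)).1
      have := hN _ hb 2
      simpa using this
    · exfalso
      obtain ⟨t, ht⟩ := exists_bseq hFN hNi
      have ht' : BSeq (BB x ε N2) L t := ⟨ht.1, fun i => ⟨(ht.2 i).1, (ht.2 i).2.trans hNL⟩⟩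
      obtain ⟨j, k, hjk, h⟩ := pair_lemma hsm (sm_blk (x := x) ht.1) (1 + ε) (by
          intro j
          have hne := (ht.2 j).1.1
          have hm := Finset.min'_mem _ hne
          have hl := Finset.min'_le (t j)
          set a := (t j).min' hne
          have := mono {a} ((t j).erase a) (by
            simpa using hNN1 ((ht.2 j).2 hm)) (by
            intro b hb
            have hb' := Finset.mem_erase.1 (Finset.mem_coe.1 hb)
            refine ⟨hNN1 ((ht.2 j).2 hb'.2), ?_⟩
            intro i hi
            rw [Finset.mem_singleton] at hi
            have h3 := hl b hb'.2
            have h4 := hb'.1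
            omega)
          have e1 : sm x {a} + sm x ((t j).erase a) = sm x (t j) := by
            simp only [sm, Finset.sum_singleton]
            exact Finset.add_sum_erase _ _ hm
          rw [e1] at this
          simp only [sm, Finset.sum_singleton, hx] at this
          simp only [sm]
          have : δ ≤ 1 / 2 := by simp only [hδd]; linarith
          linarith) (fun j => (ht.2 j).1.2.2.1.norm_le) (hL t ht') δ hδ
      have hidx : StrictMono (fun i : ℕ => if i = 0 then j else k + (i - 1)) := by
        apply strictMono_nat_of_lt_succ
        intro i
        rcases i with _ | i
        · simpa using hjk
        · simp
      obtain ⟨n, hn⟩ := hN (fun i => t (if i = 0 then j else k + (i - 1)))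
        ⟨fun i i' hii => ht.1 _ _ (hidx hii), fun i => ht.2 _⟩
      have := hn.2
      simp only [if_true, one_ne_zero, if_false, Nat.sub_self, add_zero] at this
      linarith
  refine ⟨N, hNN1.trans hN1M, hNi, ?_⟩
  intro P hP hPi
  obtain ⟨k, hk⟩ := hFN P hP hPi
  have hsN : (ini P k : Set ℕ) ⊆ N := fun i hi => hP (mem_ini.1 (Finset.mem_coe.1 hi)).2
  set s := ini P k
  have hT' : TT x ε' s := fun b => (hk.2.2.1 b).trans (by linarith)
  refine ⟨k, hk.1, hT', ?_⟩
  intro w hw hTw b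
  rw [Finset.filter_union]
  rcases Finset.eq_empty_or_nonempty (w.filter (· < b)) with h | ⟨i0, hi0⟩
  · rw [h, Finset.union_empty]
    exact hT' b
  rw [Finset.mem_filter] at hi0
  have hsb : s.filter (· < b) = s := Finset.filter_true_of_mem fun i hi => by
    have := (hw hi0.1).2 i hi
    omega
  rw [hsb]
  have hP'i := above_inf hNi (s ∪ w)
  have hwN : (w : Set ℕ) ⊆ N := hw.trans (above_sub _ _)
  obtain ⟨k', hk'⟩ := hFN ((w : Set ℕ) ∪ above N (s ∪ w))
    (Set.union_subset hwN (above_sub _ _)) (hP'i.mono Set.subset_union_right)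
  set P' := (w : Set ℕ) ∪ above N (s ∪ w) with hP'
  have hwk : ∀ a ∈ w, a < k' := by
    by_contra hcon
    push Not at hcon
    obtain ⟨a1, ha1, hka1⟩ := hcon
    have e1 : ini P' k' = w.filter (· < k') := by
      ext i
      simp only [mem_ini, Finset.mem_filter, hP', Set.mem_union, Finset.mem_coe]
      constructor
      · rintro ⟨h1, h2 | h2⟩
        · exact ⟨h2, h1⟩
        · have := h2.2 a1 (Finset.mem_union_right _ ha1)
          omega
      · rintro ⟨h1, h2⟩; exact ⟨h2, Or.inl h1⟩
    rw [e1] at hk'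
    have := BB_max (hwN.trans hNN2) hTw k' hk' a1 ha1
    omega
  set t := ini P' k'
  have htmem : ∀ a ∈ t, a ∈ w ∨ a ∈ above N (s ∪ w) := fun a ha => (mem_ini.1 ha).2
  have htN : (t : Set ℕ) ⊆ N := fun a ha => by
    rcases htmem a ha with h | h
    · exact hwN h
    · exact h.1
  have hst : ∀ a ∈ s, ∀ c ∈ t, a < c := by
    intro a ha c hc
    rcases htmem c hc with h | h
    · exact (hw h).2 a ha
    · exact h.2 a (Finset.mem_union_left _ ha)
  have hwt : ∀ a ∈ w, a ∈ t := fun a ha => mem_ini.2 ⟨hwk a ha, Or.inl ha⟩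
  have h1 := hpair s hk t hk' hsN htN hst
  have h3 := mono (s ∪ w.filter (· < b)) (t.filter (fun a => ¬ (a ∈ w.filter (· < b)))) (by
    intro a ha
    rcases Finset.mem_union.1 (Finset.mem_coe.1 ha) with h | h
    · exact hNN1 (hsN h)
    · exact hNN1 (hwN (Finset.mem_filter.1 h).1)) (by
    intro a ha
    have ha' := Finset.mem_filter.1 (Finset.mem_coe.1 ha)
    refine ⟨hNN1 (htN ha'.1), fun i hi => ?_⟩
    rcases Finset.mem_union.1 hi with h | h
    · exact hst i h a ha'.1
    · rw [Finset.mem_filter] at h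
      rcases htmem a ha'.1 with h4 | h4
      · have : ¬ a < b := fun h5 => ha'.2 (Finset.mem_filter.2 ⟨h4, h5⟩)
        omega
      · exact h4.2 i (Finset.mem_union_right _ h.1))
  have e2 : sm x (s ∪ w.filter (· < b)) + sm x (t.filter (fun a => ¬ (a ∈ w.filter (· < b)))) =
      sm x s + sm x t := by
    rw [sm_union (fun a ha c hc => (hw (Finset.mem_filter.1 hc).1).2 a ha), add_assoc]
    congr 1
    have e3 : w.filter (· < b) = t.filter (fun a => a ∈ w.filter (· < b)) := by
      ext a
      simp only [Finset.mem_filter]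
      constructor
      · intro h; exact ⟨hwt a h.1, h⟩
      · intro h; exact h.2
    simp only [sm]
    conv_lhs => enter [1]; rw [e3]
    exact Finset.sum_filter_add_sum_filter_not _ _ _
  rw [e2] at h3
  have : ε + δ + δ = ε' := by simp only [hδd]; ring
  linarith

end C0SM


namespace C0SM

variable {X : Type} [NormedAddCommGroup X] [NormedSpace ℝ X]

theorem ini_range {q : ℕ → ℕ} (hq : StrictMono q) (k : ℕ) :
    ∃ m, ini (Set.range q) k = (Finset.range m).image q := by
  classical
  have hex : ∃ m, k ≤ q m := ⟨k, hq.id_le k⟩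
  refine ⟨Nat.find hex, ?_⟩
  ext a
  simp only [mem_ini, Finset.mem_image, Finset.mem_range, Set.mem_range]
  constructor
  · rintro ⟨h1, i, rfl⟩
    refine ⟨i, ?_, rfl⟩
    by_contra hc
    have := hq.monotone (not_lt.1 hc)
    have := Nat.find_spec hex
    omega
  · rintro ⟨i, hi, rfl⟩
    exact ⟨not_le.1 (Nat.find_min hex hi), i, rfl⟩

theorem contra [CompleteSpace X] {x : ℕ → X} (hx : ∀ i, ‖x i‖ = 1) (hwn : WeaklyNull x)
    (hl1 : ¬ Embeds ellOne X) (hsm : SMH x)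
    (M : Set ℕ) (hM : M.Infinite) (h2 : ∀ P ⊆ M, P.Infinite → ∃ k, 2 < ‖sm x (ini P k)‖) :
    False := by
  classical
  let Q : ℕ → Set ℕ → Prop := fun n N => ∀ P ⊆ N, P.Infinite → ∃ k, (ini P k).Nonempty ∧
      TT x (1 / ((n : ℝ) + 1)) (ini P k) ∧
      ∀ w : Finset ℕ, (w : Set ℕ) ⊆ above N (ini P k) → TT x (1 / (((n + 1 : ℕ) : ℝ) + 1)) w →
        TT x (1 / ((n : ℝ) + 1)) (ini P k ∪ w)
  have step : ∀ (n : ℕ) (L : {L : Set ℕ // L ⊆ M ∧ L.Infinite}),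
      ∃ N : {L : Set ℕ // L ⊆ M ∧ L.Infinite}, N.1 ⊆ L.1 ∧ Q n N.1 := by
    intro n L
    obtain ⟨N, h3, h4, h5⟩ := stack hx hwn hl1 hsm (1 / (((n + 1 : ℕ) : ℝ) + 1))
      (1 / ((n : ℝ) + 1)) (by positivity) (by push_cast; gcongr; linarith) (by
        rw [div_le_one (by positivity)]
        have : (0 : ℝ) ≤ n := by positivity
        linarith) L.1 L.2.2
      (fun P hP => h2 P (hP.trans L.2.1))
    exact ⟨⟨N, h3.trans L.2.1, h4⟩, h3, h5⟩
  choose g hg1 hg2 using step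
  let N : ℕ → {L : Set ℕ // L ⊆ M ∧ L.Infinite} :=
    fun n => Nat.rec (g 0 ⟨M, subset_rfl, hM⟩) (fun n L => g (n + 1) L) n
  have hNs : ∀ n, N (n + 1) = g (n + 1) (N n) := fun n => rfl
  have hNQ : ∀ n, Q n (N n).1 := by
    intro n
    cases n with
    | zero => exact hg2 _ _
    | succ n => rw [hNs]; exact hg2 _ _
  have hanti : Antitone (fun n => (N n).1) := antitone_nat_of_succ_le fun n => by
    rw [hNs]; exact hg1 _ _
  have claim : ∀ (l n : ℕ) (q : ℕ → ℕ), StrictMono q → (∀ i, q i ∈ (N (n + i)).1) →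
      TT x (1 / ((n : ℝ) + 1)) ((Finset.range l).image q) := by
    intro l
    induction l using Nat.strong_induction_on with
    | _ l ih =>
    intro n q hq hqN
    obtain ⟨k, hk1, hk2, hk3⟩ := hNQ n (Set.range q) (by
      rintro _ ⟨i, rfl⟩
      exact hanti (Nat.le_add_right n i) (hqN i)) (Set.infinite_range_of_injective hq.injective)
    obtain ⟨m, hm⟩ := ini_range hq k
    rw [hm] at hk1 hk2 hk3
    have hmpos : 0 < m := by
      by_contra hc
      have : m = 0 := by omega
      simp [this] at hk1
    by_cases hlm : l ≤ m
    · intro b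
      have := hk2 (min b (q l))
      convert this using 3
      ext a
      simp only [Finset.mem_filter, Finset.mem_image, Finset.mem_range, lt_min_iff]
      constructor
      · rintro ⟨⟨i, hi, rfl⟩, hb⟩
        exact ⟨⟨i, by omega, rfl⟩, hb, hq hi⟩
      · rintro ⟨⟨i, hi, rfl⟩, hb, h⟩
        exact ⟨⟨i, hq.lt_iff_lt.1 h, rfl⟩, hb⟩
    · have hw := ih (l - m) (by omega) (n + 1) (fun i => q (i + m))
        (hq.comp fun a b h => by simpa using h) (fun i => by
          exact hanti (show n + 1 + i ≤ n + (i + m) by omega) (hqN (i + m)))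
      have := hk3 _ (by
        intro a ha
        obtain ⟨i, hi, rfl⟩ := Finset.mem_image.1 (Finset.mem_coe.1 ha)
        refine ⟨hanti (Nat.le_add_right n (i + m)) (hqN (i + m)), ?_⟩
        intro c hc
        obtain ⟨i', hi', rfl⟩ := Finset.mem_image.1 hc
        rw [Finset.mem_range] at hi'
        exact hq (by omega)) hw
      convert this using 1
      ext a
      simp only [Finset.mem_union, Finset.mem_image, Finset.mem_range]
      constructor
      · rintro ⟨i, hi, rfl⟩
        by_cases h : i < m
        · exact Or.inl ⟨i, h, rfl⟩
        · exact Or.inr ⟨i - m, by omega, by congr 1; omega⟩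
      · rintro (⟨i, hi, rfl⟩ | ⟨i, hi, rfl⟩)
        · exact ⟨i, by omega, rfl⟩
        · exact ⟨i + m, by omega, rfl⟩
  obtain ⟨φ, hφ, hφ2⟩ := extraction_forall_of_frequently
    (fun n => (Nat.frequently_atTop_iff_infinite (p := fun i => i ∈ (N n).1)).2 (N n).2.2)
  obtain ⟨k, hk⟩ := h2 (Set.range φ) (by
    rintro _ ⟨i, rfl⟩; exact (N i).2.1 (hφ2 i)) (Set.infinite_range_of_injective hφ.injective)
  obtain ⟨m, hm⟩ := ini_range hφ k
  rw [hm] at hk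
  have := (claim m 0 φ hφ (fun i => by rw [zero_add]; exact hφ2 i)).norm_le
  norm_num at this
  linarith

theorem bounded_sums [CompleteSpace X] {x : ℕ → X} (hx : ∀ i, ‖x i‖ = 1) (hwn : WeaklyNull x)
    (hl1 : ¬ Embeds ellOne X) (hsm : SMH x) :
    ∃ M : Set ℕ, M.Infinite ∧ ∀ s : Finset ℕ, (s : Set ℕ) ⊆ M → ‖sm x s‖ ≤ 2 := by
  obtain ⟨N, -, hNi, h⟩ := galvin {s | 2 < ‖sm x s‖} Set.univ Set.infinite_univ
  rcases h with h | h
  · exact ⟨N, hNi, fun s hs => not_lt.1 (h s hs)⟩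
  · exact (contra hx hwn hl1 hsm N hNi h).elim

theorem c0_concl {x : ℕ → X} (hx : ∀ i, ‖x i‖ = 1) (hwn : WeaklyNull x) (M : Set ℕ)
    (hM : M.Infinite) (h2 : ∀ s : Finset ℕ, (s : Set ℕ) ⊆ M → ‖sm x s‖ ≤ 2) :
    ∃ q : ℕ → ℕ, StrictMono q ∧ EquivC0Basis (fun i => x (q i)) := by
  classical
  obtain ⟨N, hNM, hNi, hN⟩ := mono_lemma x hwn M hM (1 / 4) (by norm_num)
  have hq : StrictMono (Nat.nth (· ∈ N)) := Nat.nth_strictMono hNi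
  have hqN : ∀ i, Nat.nth (· ∈ N) i ∈ N := fun i => Nat.nth_mem_of_infinite hNi i
  set q := Nat.nth (· ∈ N)
  refine ⟨q, hq, 4, by norm_num, ?_⟩
  intro k a
  set A : ℝ := (((Finset.range k).sup fun i => ‖a i‖₊ : ℝ≥0) : ℝ) with hA
  have hA0 : 0 ≤ A := NNReal.coe_nonneg _
  have haA : ∀ i < k, |a i| ≤ A := by
    intro i hi
    have : ‖a i‖₊ ≤ (Finset.range k).sup fun i => ‖a i‖₊ :=
      Finset.le_sup (f := fun i => ‖a i‖₊) (Finset.mem_range.2 hi)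
    exact_mod_cast this
  constructor
  · rcases hA0.eq_or_lt with h0 | hpos
    · rw [← h0, mul_zero]; exact norm_nonneg _
    have hkne : (Finset.range k).Nonempty := by
      rw [Finset.nonempty_range_iff]
      rintro rfl
      simp [hA] at hpos
    obtain ⟨j, hj, hjA⟩ := Finset.exists_mem_eq_sup (Finset.range k) hkne (fun i => ‖a i‖₊)
    rw [Finset.mem_range] at hj
    have hjA' : |a j| = A := by rw [hA, hjA]; rfl
    let b : ℕ → ℝ := fun i => if i < k then A⁻¹ * a i else 0
    have hb : ∀ i, |b i| ≤ 1 := by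
      intro i
      simp only [b]
      split_ifs with h
      · rw [abs_mul, abs_inv, abs_of_pos hpos, inv_mul_le_iff₀ hpos, mul_one]
        exact haA i h
      · simp
    let b' : ℕ → ℝ := Function.extend q b 0
    have hb'q : ∀ i, b' (q i) = b i := fun i => hq.injective.extend_apply _ _ _
    have hb' : ∀ i, |b' i| ≤ 1 := by
      intro i
      by_cases h : ∃ n, q n = i
      · obtain ⟨n, rfl⟩ := h
        rw [hb'q]; exact hb n
      · simp only [b']
        rw [Function.extend_apply' _ _ _ h]
        simp
    have hpre : ∀ m ≤ k, ‖∑ i ∈ Finset.range m, b i • x (q i)‖ ≤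
        ‖∑ i ∈ Finset.range k, b i • x (q i)‖ + 1 / 4 := by
      intro m hm
      have := hN ((Finset.range m).image q) ((Finset.Ico m k).image q) (by
        intro c hc
        obtain ⟨i, -, rfl⟩ := Finset.mem_image.1 (Finset.mem_coe.1 hc)
        exact hqN i) (by
        intro c hc
        obtain ⟨i, hi, rfl⟩ := Finset.mem_image.1 (Finset.mem_coe.1 hc)
        refine ⟨hqN i, ?_⟩
        intro d hd
        obtain ⟨i', hi', rfl⟩ := Finset.mem_image.1 hd
        rw [Finset.mem_range] at hi'
        rw [Finset.mem_Ico] at hi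
        exact hq (by omega)) b' hb'
      rw [Finset.sum_image hq.injective.injOn, Finset.sum_image hq.injective.injOn] at this
      simp only [hb'q] at this
      rwa [Finset.sum_range_add_sum_Ico _ hm] at this
    have h1 := hpre j hj.le
    have h3 := hpre (j + 1) hj
    rw [Finset.sum_range_succ] at h3
    have h4 : ‖b j • x (q j)‖ = 1 := by
      rw [norm_smul, hx, mul_one, Real.norm_eq_abs]
      simp only [b, hj, if_true]
      rw [abs_mul, hjA', abs_inv, abs_of_pos hpos]
      exact inv_mul_cancel₀ hpos.ne'
    have h5 := norm_sub_le (∑ i ∈ Finset.range j, b i • x (q i) + b j • x (q j))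
      (∑ i ∈ Finset.range j, b i • x (q i))
    rw [add_sub_cancel_left, h4] at h5
    have h6 : ∑ i ∈ Finset.range k, b i • x (q i) =
        A⁻¹ • ∑ i ∈ Finset.range k, a i • x (q i) := by
      rw [Finset.smul_sum]
      refine Finset.sum_congr rfl fun i hi => ?_
      rw [Finset.mem_range] at hi
      simp only [b, hi, if_true, mul_smul]
    have h7 : 1 / 4 ≤ A⁻¹ * ‖∑ i ∈ Finset.range k, a i • x (q i)‖ := by
      rw [h6, norm_smul, norm_inv, Real.norm_of_nonneg hA0] at h1 h3
      linarith
    rw [le_inv_mul_iff₀ hpos] at h7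
    linarith
  · obtain ⟨f, hf1, hf2⟩ := exists_norming (∑ i ∈ Finset.range k, a i • x (q i))
    rw [← hf2, map_sum]
    have hs : ∀ s : Finset ℕ, |∑ i ∈ s, f (x (q i))| ≤ 2 := by
      intro s
      have h3 := h2 (s.image q) (by
        intro c hc
        obtain ⟨i, -, rfl⟩ := Finset.mem_image.1 (Finset.mem_coe.1 hc)
        exact hNM (hqN i))
      have := le_norm_of_le_one hf1 (sm x (s.image q))
      rw [sm, Finset.sum_image hq.injective.injOn, map_sum] at this
      rw [sm, Finset.sum_image hq.injective.injOn] at h3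
      exact this.trans h3
    have h4 : ∑ i ∈ Finset.range k, |f (x (q i))| ≤ 4 := by
      rw [← Finset.sum_filter_add_sum_filter_not (Finset.range k) (fun i => 0 ≤ f (x (q i)))]
      have e1 : ∑ i ∈ Finset.range k with 0 ≤ f (x (q i)), |f (x (q i))| =
          ∑ i ∈ Finset.range k with 0 ≤ f (x (q i)), f (x (q i)) :=
        Finset.sum_congr rfl fun i hi => abs_of_nonneg (Finset.mem_filter.1 hi).2
      have e2 : ∑ i ∈ Finset.range k with ¬ 0 ≤ f (x (q i)), |f (x (q i))| =
          - ∑ i ∈ Finset.range k with ¬ 0 ≤ f (x (q i)), f (x (q i)) := by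
        rw [← Finset.sum_neg_distrib]
        exact Finset.sum_congr rfl fun i hi => abs_of_neg (not_le.1 (Finset.mem_filter.1 hi).2)
      rw [e1, e2]
      have := (abs_le.1 (hs ({i ∈ Finset.range k | 0 ≤ f (x (q i))}))).2
      have := (abs_le.1 (hs ({i ∈ Finset.range k | ¬ 0 ≤ f (x (q i))}))).1
      linarith
    calc ∑ i ∈ Finset.range k, f (a i • x (q i))
        ≤ ∑ i ∈ Finset.range k, A * |f (x (q i))| := by
          refine Finset.sum_le_sum fun i hi => ?_
          rw [map_smul, smul_eq_mul]
          refine (le_abs_self _).trans ?_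
          rw [abs_mul]
          exact mul_le_mul_of_nonneg_right (haA i (Finset.mem_range.1 hi)) (abs_nonneg _)
      _ = A * ∑ i ∈ Finset.range k, |f (x (q i))| := by rw [Finset.mul_sum]
      _ ≤ 4 * A := by nlinarith

end C0SM

theorem c0_spreading_models
    {X : Type} [NormedAddCommGroup X] [NormedSpace ℝ X] [CompleteSpace X]
    (x : ℕ → X) (hbasis : IsSchauderBasis x) (hnorm : ∀ i, ‖x i‖ = 1)
    (hwn : WeaklyNull x) (hl1 : ¬ Embeds ellOne X)
    (hsm : ∀ (E : Type) [NormedAddCommGroup E] [NormedSpace ℝ E] [CompleteSpace E],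
      ∀ (y : ℕ → X) (e : ℕ → E), IsBlockBasis x y → (∀ j, ‖y j‖ = 1) → WeaklyNull y →
        IsSpreadingModel y e → ‖e 0 - e 1‖ = 1) :
    ∃ M : ℕ → ℕ, StrictMono M ∧ EquivC0Basis (fun i => x (M i)) := by
  obtain ⟨M, hM, h⟩ := C0SM.bounded_sums hnorm hwn hl1 hsm
  exact C0SM.c0_concl hnorm hwn M hM h
end

section
/- (Elton–Odell) Let X be an infinite-dimensional Banach space. Then there exist λ > 1 and an infinite sequence (x_i) in the unit sphere of X such that ‖x_i − x_j‖ ≥ λ for all i ≠ j. -/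
open Filter Finset Topology NormedSpace
open scoped NNReal

attribute [local instance] Ultrafilter.add Ultrafilter.addSemigroup

namespace EltonOdell

variable {X : Type} [NormedAddCommGroup X] [NormedSpace ℝ X]

/-- The conclusion of the theorem. -/
def Sep (X : Type) [NormedAddCommGroup X] : Prop :=
  ∃ lam : ℝ, 1 < lam ∧ ∃ x : ℕ → X, (∀ i, ‖x i‖ = 1) ∧
      ∀ i j : ℕ, i ≠ j → lam ≤ ‖x i - x j‖

/-- Ultrafilters on `X` that do not shrink norms asymptotically. -/
def Far (p : Ultrafilter X) : Prop := ∀ (y : X) (c : ℝ), c < ‖y‖ → ∀ᶠ w in (p : Filter X), c < ‖y + w‖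

def Low (p : Ultrafilter X) : Prop := ∀ c : ℝ, c < 1 → ∀ᶠ w in (p : Filter X), c < ‖w‖

def Up (p : Ultrafilter X) : Prop := ∀ c : ℝ, 1 < c → ∀ᶠ w in (p : Filter X), ‖w‖ < c

/-- Almost normalized separated sequences can be normalized. -/
lemma sep_of_almost (η lam : ℝ) (hη : η < 1) (h1 : 1 + 2 * η < lam) (z : ℕ → X)
    (hz : ∀ n, |‖z n‖ - 1| ≤ η) (hs : ∀ m n, m < n → lam ≤ ‖z m - z n‖) : Sep X := by
  have hpos : ∀ n, 0 < ‖z n‖ := fun n => by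
    have := abs_le.1 (hz n)
    linarith
  have hd : ∀ n, ‖(‖z n‖⁻¹ • z n) - z n‖ ≤ η := fun n => by
    have h : (‖z n‖⁻¹ • z n) - z n = (‖z n‖⁻¹ - 1) • z n := by rw [sub_smul, one_smul]
    rw [h, norm_smul, Real.norm_eq_abs]
    have : |‖z n‖⁻¹ - 1| * ‖z n‖ = |‖z n‖ - 1| := by
      conv_lhs => rw [← abs_of_pos (hpos n), ← abs_mul, abs_of_pos (hpos n)]
      rw [sub_mul, inv_mul_cancel₀ (hpos n).ne', one_mul, abs_sub_comm]
    rw [this]; exact hz n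
  have key : ∀ m n, m < n → lam - 2 * η ≤ ‖(‖z m‖⁻¹ • z m) - (‖z n‖⁻¹ • z n)‖ := fun m n hmn => by
    have e : z m - z n = ((‖z m‖⁻¹ • z m) - (‖z n‖⁻¹ • z n)) -
      ((‖z m‖⁻¹ • z m) - z m) + ((‖z n‖⁻¹ • z n) - z n) := by abel
    have h2 := hs m n hmn
    rw [e] at h2
    have h3 := norm_add_le (((‖z m‖⁻¹ • z m) - (‖z n‖⁻¹ • z n)) - ((‖z m‖⁻¹ • z m) - z m))
      ((‖z n‖⁻¹ • z n) - z n)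
    have h4 := norm_sub_le ((‖z m‖⁻¹ • z m) - (‖z n‖⁻¹ • z n)) ((‖z m‖⁻¹ • z m) - z m)
    linarith [hd m, hd n]
  refine ⟨lam - 2 * η, by linarith, fun n => ‖z n‖⁻¹ • z n, fun n => ?_, fun i j hij => ?_⟩
  · rw [norm_smul, norm_inv, norm_norm, inv_mul_cancel₀ (hpos n).ne']
  · rcases lt_or_gt_of_ne hij with h | h
    · exact key i j h
    · rw [norm_sub_rev]; exact key j i h

/-- If there is no separated sequence then `(-p) + p` is again of norm at most one. -/
lemma nonsep (hns : ¬ Sep X) (p : Ultrafilter X) (hl : Low p) (hu : Up p) (c : ℝ) (hc : 1 < c) :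
    ∀ᶠ w₁ in (p : Filter X), ∀ᶠ w₂ in (p : Filter X), ‖w₂ - w₁‖ < c := by
  by_contra hcon
  have h1 : ∀ᶠ w₁ in (p : Filter X), ∀ᶠ w₂ in (p : Filter X), c ≤ ‖w₁ - w₂‖ := by
    have := Ultrafilter.eventually_not.2 hcon
    filter_upwards [this] with w hw
    have := Ultrafilter.eventually_not.2 hw
    filter_upwards [this] with v hv
    rw [norm_sub_rev]; exact not_lt.1 hv
  set η : ℝ := min ((c - 1) / 4) (1 / 2) with hη
  have hη0 : 0 < η := lt_min (by linarith) (by norm_num)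
  have hη1 : η ≤ (c - 1) / 4 := min_le_left _ _
  have hη2 : η ≤ 1 / 2 := min_le_right _ _
  have h2 : ∀ᶠ w in (p : Filter X), |‖w‖ - 1| ≤ η := by
    filter_upwards [hl (1 - η) (by linarith), hu (1 + η) (by linarith)] with w h h'
    rw [abs_le]; constructor <;> linarith
  obtain ⟨f, hf, hf'⟩ := exists_seq_of_forall_finset_exists
    (fun w : X => |‖w‖ - 1| ≤ η ∧ ∀ᶠ w₂ in (p : Filter X), c ≤ ‖w - w₂‖)
    (fun a b => c ≤ ‖a - b‖) (fun s hs => by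
      have h3 : ∀ᶠ w in (p : Filter X), ∀ x ∈ s, c ≤ ‖x - w‖ :=
        (Filter.eventually_all_finset s).2 fun x hx => (hs x hx).2
      obtain ⟨y, hy⟩ := (h1.and (h2.and h3)).exists
      exact ⟨y, ⟨hy.2.1, hy.1⟩, hy.2.2⟩)
  exact hns (sep_of_almost η c (by linarith) (by linarith) f (fun n => (hf n).1) hf')

lemma far_add {p q : Ultrafilter X} (hp : Far p) (hq : Far q) : Far (p + q) := by
  intro y c hc
  rw [Ultrafilter.eventually_add]
  filter_upwards [hp y c hc] with w hw
  filter_upwards [hq (y + w) c hw] with v hv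
  rwa [← add_assoc]

lemma low_add {p q : Ultrafilter X} (hp : Low p) (hq : Far q) : Low (p + q) := by
  intro c hc
  rw [Ultrafilter.eventually_add]
  filter_upwards [hp c hc] with w hw
  exact hq w c hw

lemma up_of_add {p q : Ultrafilter X} (hq : Far q) (h : Up (p + q)) : Up p := by
  intro c hc
  by_contra hcon
  have hcon := Ultrafilter.eventually_not.2 hcon
  have h1 := h ((1 + c) / 2) (by linarith)
  rw [Ultrafilter.eventually_add] at h1
  obtain ⟨w, hw1, hw2⟩ := (h1.and hcon).exists
  obtain ⟨v, hv1, hv2⟩ := (hw1.and (hq w ((1 + c) / 2) (by linarith))).exists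
  linarith

lemma isClosed_ev (A : Set X) : IsClosed {p : Ultrafilter X | ∀ᶠ w in (p : Filter X), w ∈ A} :=
  ultrafilter_isClosed_basic A

lemma isClosed_far : IsClosed {p : Ultrafilter X | Far p} := by
  simp only [Far, Set.ofPred_forall]
  exact isClosed_iInter fun y => isClosed_iInter fun c => isClosed_iInter fun _ =>
    isClosed_ev {w | c < ‖y + w‖}

lemma isClosed_low : IsClosed {p : Ultrafilter X | Low p} := by
  simp only [Low, Set.ofPred_forall]
  exact isClosed_iInter fun c => isClosed_iInter fun _ => isClosed_ev {w | c < ‖w‖}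

lemma isClosed_up : IsClosed {p : Ultrafilter X | Up p} := by
  simp only [Up, Set.ofPred_forall]
  exact isClosed_iInter fun c => isClosed_iInter fun _ => isClosed_ev {w | ‖w‖ < c}

/-- Existence of a normalized ultrafilter that is asymptotically monotone. -/
lemma exists_start (hinf : ¬ FiniteDimensional ℝ X) :
    ∃ p : Ultrafilter X, Far p ∧ Low p ∧ Up p := by
  let A : X → Set X := fun y => {w | ‖w‖ = 1 ∧ ‖y‖ ≤ ‖y + w‖}
  have hne : NeBot (generate (Set.range A)) := by
    rw [generate_neBot_iff]
    intro t ht htf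
    obtain ⟨s, hs⟩ : ∃ s : Finset X, A '' (s : Set X) = t := by
      classical
      choose! h hh using fun D (hD : D ∈ t) => ht hD
      refine ⟨htf.toFinset.image h, ?_⟩
      ext B
      constructor
      · rintro ⟨y, hy, rfl⟩
        obtain ⟨D, hD, rfl⟩ := Finset.mem_image.1 (Finset.mem_coe.1 hy)
        have hD' := htf.mem_toFinset.1 hD
        rw [hh D hD']; exact hD'
      · intro hB
        exact ⟨h B, Finset.mem_coe.2 (Finset.mem_image_of_mem h (htf.mem_toFinset.2 hB)), hh B hB⟩
    choose g hg1 hg2 using fun y : X => exists_dual_vector'' ℝ y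
    let T : X →ₗ[ℝ] (s → ℝ) := LinearMap.pi fun y => (g y : X →ₗ[ℝ] ℝ)
    have hT : ∃ w, T w = 0 ∧ w ≠ 0 := by
      by_contra hcon
      push Not at hcon
      have hinj : Function.Injective T := (injective_iff_map_eq_zero T).2 hcon
      exact hinf (FiniteDimensional.of_injective T hinj)
    obtain ⟨w, hw, hw0⟩ := hT
    have hn : ‖w‖ ≠ 0 := norm_ne_zero_iff.2 hw0
    refine ⟨‖w‖⁻¹ • w, ?_⟩
    rw [← hs]
    rintro _ ⟨y, hy, rfl⟩
    refine ⟨by rw [norm_smul, norm_inv, norm_norm, inv_mul_cancel₀ hn], ?_⟩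
    have h0 : g y w = 0 := congrFun hw ⟨y, hy⟩
    calc ‖y‖ = g y (y + ‖w‖⁻¹ • w) := by rw [map_add, map_smul, h0, hg2]; simp
      _ ≤ ‖g y (y + ‖w‖⁻¹ • w)‖ := le_abs_self _
      _ ≤ ‖g y‖ * ‖y + ‖w‖⁻¹ • w‖ := (g y).le_opNorm _
      _ ≤ 1 * ‖y + ‖w‖⁻¹ • w‖ := by gcongr; exact hg1 y
      _ = _ := one_mul _
  obtain ⟨p, hp⟩ := Ultrafilter.exists_le (generate (Set.range A))
  have hA : ∀ y, A y ∈ (p : Filter X) := fun y =>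
    hp (mem_generate_of_mem ⟨y, rfl⟩)
  refine ⟨p, fun y c hc => ?_, fun c hc => ?_, fun c hc => ?_⟩
  · filter_upwards [hA y] with w hw
    exact lt_of_lt_of_le hc hw.2
  · filter_upwards [hA 0] with w hw
    rw [hw.1]; exact hc
  · filter_upwards [hA 0] with w hw
    rw [hw.1]; exact hc

/-- Existence of an idempotent ultrafilter of norm one. -/
lemma exists_idem (hns : ¬ Sep X) (hinf : ¬ FiniteDimensional ℝ X) :
    ∃ e : Ultrafilter X, Far e ∧ Low e ∧ Up e ∧ e + e = e := by
  let K : Set (Ultrafilter X) := {p | Far p ∧ Low p ∧ Up p}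
  let S : Set (Ultrafilter X) := {p | Far p ∧ Low p}
  have hKc : IsClosed K := isClosed_far.inter (isClosed_low.inter isClosed_up)
  have hSc : IsClosed S := isClosed_far.inter isClosed_low
  have hSS : ∀ p ∈ S, ∀ q ∈ S, p + q ∈ S := fun p hp q hq =>
    ⟨far_add hp.1 hq.1, low_add hp.2 hq.1⟩
  let L : Ultrafilter X → Set (Ultrafilter X) := fun p => ((fun q => q + p) '' S) ∩ K
  have hLc : ∀ p, IsClosed (L p) := fun p =>
    ((hSc.isCompact.image (Ultrafilter.continuous_add_left p)).isClosed).inter hKc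
  have hLne : ∀ p ∈ K, (L p).Nonempty := by
    rintro p ⟨hf, hl, hu⟩
    let q : Ultrafilter X := p.map (fun x => -x)
    have hqf : Far q := by
      intro y c hc
      change ∀ᶠ w in (p : Filter X), c < ‖y + -w‖
      filter_upwards [hf (-y) c (by rwa [norm_neg])] with w hw
      rw [← norm_neg]; simpa [add_comm] using hw
    have hql : Low q := by
      intro c hc
      change ∀ᶠ w in (p : Filter X), c < ‖-w‖
      simpa using hl c hc
    refine ⟨q + p, ⟨q, ⟨hqf, hql⟩, rfl⟩, far_add hqf hf, low_add hql hf, ?_⟩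
    intro c hc
    rw [Ultrafilter.eventually_add]
    change ∀ᶠ w in (p : Filter X), ∀ᶠ v in (p : Filter X), ‖-w + v‖ < c
    filter_upwards [nonsep hns p hl hu c hc] with w hw
    filter_upwards [hw] with v hv
    rwa [neg_add_eq_sub]
  have hLL : ∀ p ∈ K, ∀ r ∈ L p, L r ⊆ L p := by
    rintro p hp r ⟨⟨q, hq, rfl⟩, -⟩ t ⟨⟨q', hq', rfl⟩, ht⟩
    exact ⟨⟨q' + q, hSS _ hq' _ hq, add_assoc _ _ _⟩, ht⟩
  obtain ⟨Z, -, hZ⟩ := zorn_superset_nonempty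
    {Z : Set (Ultrafilter X) | IsClosed Z ∧ Z.Nonempty ∧ Z ⊆ K ∧ ∀ p ∈ Z, L p ⊆ Z}
    (by
      intro c hcS hc hne
      refine ⟨⋂₀ c, ⟨isClosed_sInter fun t ht => (hcS ht).1, ?_, ?_, ?_⟩, fun s hs =>
        Set.sInter_subset_of_mem hs⟩
      · have : Nonempty c := hne.to_subtype
        refine IsCompact.nonempty_sInter_of_directed_nonempty_isCompact_isClosed ?_ ?_ ?_ ?_
        · exact fun a ha b hb => (hc.total ha hb).elim (fun h => ⟨a, ha, subset_rfl, h⟩) fun h => ⟨b, hb, h, subset_rfl⟩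
        · exact fun t ht => (hcS ht).2.1
        · exact fun t ht => (hcS ht).1.isCompact
        · exact fun t ht => (hcS ht).1
      · obtain ⟨t, ht⟩ := hne
        exact (Set.sInter_subset_of_mem ht).trans (hcS ht).2.2.1
      · intro p hp
        exact Set.subset_sInter fun t ht => (hcS ht).2.2.2 p (hp t ht))
    K ⟨hKc, exists_start hinf, subset_rfl, fun p _ => Set.inter_subset_right⟩
  obtain ⟨p, hpZ⟩ := hZ.prop.2.1
  have hpK : p ∈ K := hZ.prop.2.2.1 hpZ
  have hsub : Z ⊆ L p := hZ.le_of_le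
    ⟨hLc p, hLne p hpK, Set.inter_subset_right, fun r hr => hLL p hpK r hr⟩
    (hZ.prop.2.2.2 p hpZ)
  obtain ⟨⟨q, hqS, hqp⟩, -⟩ := hsub hpZ
  obtain ⟨e, ⟨heS, hep⟩, hee⟩ := exists_idempotent_in_compact_add_subsemigroup
    (fun r : Ultrafilter X => Ultrafilter.continuous_add_left r) (S ∩ {q | q + p = p})
    ⟨q, hqS, hqp⟩
    ((hSc.inter (isClosed_singleton.preimage (Ultrafilter.continuous_add_left p))).isCompact)
    (by
      rintro a ⟨ha, ha'⟩ b ⟨hb, hb'⟩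
      refine ⟨hSS _ ha _ hb, ?_⟩
      change a + b + p = p
      change a + p = p at ha'
      change b + p = p at hb'
      rw [add_assoc, hb', ha'])
  refine ⟨e, heS.1, heS.2, up_of_add hpK.1 ?_, hee⟩
  change e + p = p at hep
  rw [hep]; exact hpK.2.2

/-- An idempotent of norm one yields a separated sequence. -/
lemma sep_of_idem (hns : ¬ Sep X) (e : Ultrafilter X) (hf : Far e) (hl : Low e) (hu : Up e)
    (hee : e + e = e) : Sep X := by
  have hidem : ∀ P : X → Prop, (∀ᶠ w in (e : Filter X), P w) →
      ∀ᶠ w in (e : Filter X), ∀ᶠ v in (e : Filter X), P (w + v) := by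
    intro P hP
    rw [← hee] at hP
    exact (Ultrafilter.eventually_add e e P).1 hP
  let A : X → Prop := fun u => 9 / 10 < ‖u‖ ∧ ∀ᶠ w in (e : Filter X), ‖u - w‖ < 11 / 10
  have hA : ∀ᶠ u in (e : Filter X), A u := by
    filter_upwards [hl (9 / 10) (by norm_num), nonsep hns e hl hu (11 / 10) (by norm_num)]
      with w h1 h2
    refine ⟨h1, ?_⟩
    filter_upwards [h2] with v hv
    rwa [norm_sub_rev]
  let B : X → Prop := fun u => A u ∧ ∀ᶠ w in (e : Filter X), A (u + w)
  have hB : ∀ᶠ u in (e : Filter X), B u := hA.and (hidem A hA)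
  have hBB : ∀ u, B u → ∀ᶠ w in (e : Filter X), B (u + w) := by
    intro u hu
    refine hu.2.and ?_
    filter_upwards [hidem (fun w => A (u + w)) hu.2] with w hw
    filter_upwards [hw] with v hv
    rwa [add_assoc]
  have hfneg : ∀ (y : X) (c : ℝ), c < ‖y‖ → ∀ᶠ w in (e : Filter X), c < ‖y - w‖ := by
    intro y c hc
    filter_upwards [hf (-y) c (by rwa [norm_neg])] with w hw
    rw [← norm_neg]; simpa [sub_eq_add_neg, add_comm] using hw
  let State := {s : X × Set X // B s.1 ∧ s.2.Finite ∧ ∀ z ∈ s.2, 3 / 2 < ‖z - s.1‖}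
  have step : ∀ s : State, ∃ (t : State) (z : X), |‖z‖ - 1| ≤ 1 / 5 ∧ t.1.2 = insert z s.1.2 ∧
      ∀ y ∈ s.1.2, 3 / 2 ≤ ‖y - z‖ := by
    rintro ⟨⟨u, Z⟩, hu, hZf, hZ⟩
    simp only at hu hZf hZ
    have h1 : ∀ᶠ w in (e : Filter X), ∀ z ∈ Z, 3 / 2 < ‖z - u - w‖ :=
      (Filter.eventually_all_finite hZf).2 fun z hz => hfneg _ _ (hZ z hz)
    have h2 : ∀ᶠ w in (e : Filter X), ∀ z ∈ Z, 3 / 2 < ‖z - u + w‖ :=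
      (Filter.eventually_all_finite hZf).2 fun z hz => hf _ _ (hZ z hz)
    obtain ⟨w, hw1, hw2, hw3, hw4, hw5, hw6⟩ := (h1.and (h2.and ((hBB u hu).and
      (hu.1.2.and ((hfneg u (9 / 10) hu.1.1).and (hl (9 / 10) (by norm_num))))))).exists
    refine ⟨⟨(u + w, insert (u - w) Z), hw3, hZf.insert _, ?_⟩, u - w, ?_, rfl, ?_⟩
    · intro z hz
      rcases Set.mem_insert_iff.1 hz with rfl | hz
      · have : u - w - (u + w) = (-2 : ℝ) • w := by
          rw [neg_smul, two_smul]; abel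
        simp only [this, norm_smul]
        norm_num
        linarith
      · have := hw1 z hz
        rwa [sub_sub] at this
    · rw [abs_le]; constructor <;> linarith
    · intro y hy
      have := hw2 y hy
      have e1 : y - (u - w) = y - u + w := by abel
      rw [e1]; exact this.le
  choose nxt z hz1 hz2 hz3 using step
  obtain ⟨u₀, hu₀⟩ := hB.exists
  let s₀ : State := ⟨(u₀, ∅), hu₀, Set.finite_empty, by simp⟩
  let σ : ℕ → State := fun n => nxt^[n] s₀
  have hσ : ∀ n, σ (n + 1) = nxt (σ n) := fun n => Function.iterate_succ_apply' nxt n s₀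
  have hmem : ∀ m n, m < n → z (σ m) ∈ (σ n).1.2 := by
    intro m n hmn
    induction n, hmn using Nat.le_induction with
    | base => rw [hσ, hz2]; exact Set.mem_insert _ _
    | succ n _ ih => rw [hσ, hz2]; exact Set.mem_insert_of_mem _ ih
  exact sep_of_almost (1 / 5) (3 / 2) (by norm_num) (by norm_num) (fun n => z (σ n))
    (fun n => hz1 _) (fun m n hmn => hz3 _ _ (hmem m n hmn))

end EltonOdell

theorem elton_odell
    {X : Type} [NormedAddCommGroup X] [NormedSpace ℝ X] [CompleteSpace X]
    (hinf : ¬ FiniteDimensional ℝ X) :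
    ∃ lam : ℝ, 1 < lam ∧ ∃ x : ℕ → X, (∀ i, ‖x i‖ = 1) ∧
      ∀ i j : ℕ, i ≠ j → lam ≤ ‖x i - x j‖ := by
  by_contra hns
  obtain ⟨e, h1, h2, h3, h4⟩ := EltonOdell.exists_idem (X := X) hns hinf
  exact hns (EltonOdell.sep_of_idem hns e h1 h2 h3 h4)
end
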